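/- arXiv:2006.01853 — 2 statements merged into one kernel-verified Lean document; each statement's English description precedes it below -/
import Mathlib

section
/- Let d ≥ 1, let Q₀ ⊆ ℝ^d be a dyadic cube, let λ₀ ∈ ℝ, and let f ∈ L¹(Q₀) satisfy |{f > λ₀} ∩ Q₀| ≤ 2^{-d-1}|Q₀|. For each λ ∈ ℝ let 𝒬_λ denote the set of maximal dyadic cubes Q ⊆ Q₀ (with respect to inclusion) satisfying f_Q > λ. Then |Q₀| · (f_{Q₀} − λ₀) ≤ 2^{d+1} ∫_{λ₀}^{∞} | {f > λ} ∩ ⋃{ P ∈ 𝒬_λ : |{f > λ} ∩ P| ≤ |P|/2 } | dλ. -/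
open MeasureTheory Metric Set Filter
open scoped ENNReal Topology

noncomputable section

/-- `ℝ^d` as Euclidean space. -/
abbrev Ed (d : ℕ) := EuclideanSpace ℝ (Fin d)

/-- A dyadic cube `∏_i [2^n m_i, 2^n (m_i + 1))`. -/
def IsDyadicCube {d : ℕ} (Q : Set (Ed d)) : Prop :=
  ∃ (n : ℤ) (m : Fin d → ℤ),
    Q = {x : Ed d | ∀ i, x i ∈ Set.Ico ((2:ℝ)^n * m i) ((2:ℝ)^n * (m i + 1))}

/-- `P` is a maximal dyadic cube `P ⊆ Q₀` (w.r.t. inclusion) with `⨍_P f > λ`. -/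
def IsMaxSubcube {d : ℕ} (Q₀ : Set (Ed d)) (f : Ed d → ℝ) (lam : ℝ)
    (P : Set (Ed d)) : Prop :=
  IsDyadicCube P ∧ P ⊆ Q₀ ∧ lam < ⨍ z in P, f z ∧
    ∀ P' : Set (Ed d), IsDyadicCube P' → P' ⊆ Q₀ → lam < (⨍ z in P', f z) → P ⊆ P' → P' = P

/-!
Let `V t` be the union of those cubes that are maximal among the dyadic subcubes of `Q₀` of which
`{f > t}` fills more than the fraction `2 ^ (-d-1)`, and on which `f` has average greater than `t`.
Almost all of `{f > t}` lies in such maximal cubes, so `V t` maximises `∫_W (f - t)` among all sets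
`W ⊆ Q₀` that each of the maximal cubes is either contained in or disjoint from. As the maximal
cubes shrink when `t` grows, `V s` with `s ≤ t` is such a `W`. Hence `F t = ∫_{V t} (f - t)`
satisfies `F s - F t ≤ (t - s) |V s|`, and since `F` tends to `0` at infinity,
`∫_{Q₀} (f - λ₀) ≤ F λ₀ ≤ ∫_{λ₀}^∞ |V t| dt`.

By construction `|V t| ≤ 2 ^ (d+1) |{f > t} ∩ V t|`. Finally, each cube of `V t` lies in some
`P ∈ 𝒬_t`. The set `{f > t}` fills at most the fraction `2 ^ (-d-1)` of `P` or, if `P` is itself one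
of the maximal cubes, of the dyadic parent of `P`; in both cases it fills at most half of `P`.
-/

section Measure

variable {α : Type*} [MeasurableSpace α] {μ : Measure α} {𝒟 : Set (Set α)}

lemma measure_inter_sUnion (h𝒟 : 𝒟.Countable) (hdisj : 𝒟.Pairwise Disjoint)
    (hmeas : ∀ Q ∈ 𝒟, MeasurableSet Q) (E : Set α) :
    μ (E ∩ ⋃₀ 𝒟) = ∑' Q : 𝒟, μ (E ∩ Q) := by
  have hsum := measure_sUnion (μ := μ.restrict E) h𝒟 hdisj hmeas
  rw [Measure.restrict_apply (.sUnion h𝒟 hmeas), inter_comm] at hsum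
  rw [hsum]
  exact tsum_congr fun Q => by rw [Measure.restrict_apply (hmeas Q Q.2), inter_comm]

lemma hasSum_setIntegral_inter {h : α → ℝ} (h𝒟 : 𝒟.Countable) (hdisj : 𝒟.Pairwise Disjoint)
    (hmeas : ∀ Q ∈ 𝒟, MeasurableSet Q) {W : Set α} (hW : MeasurableSet W)
    (hint : IntegrableOn h W μ) :
    HasSum (fun Q : 𝒟 => ∫ x in (Q : Set α) ∩ W, h x ∂μ) (∫ x in ⋃₀ 𝒟 ∩ W, h x ∂μ) := by
  have : Countable 𝒟 := h𝒟
  rw [sUnion_eq_iUnion, iUnion_inter]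
  refine hasSum_integral_iUnion (fun Q => (hmeas Q Q.2).inter hW) (fun P Q hPQ => ?_)
    (hint.mono_set (iUnion_subset fun _ => inter_subset_right))
  exact (hdisj P.2 Q.2 (Subtype.coe_injective.ne hPQ)).mono inter_subset_left inter_subset_left

lemma setIntegral_le_setIntegral_sUnion {h : α → ℝ} (h𝒟 : 𝒟.Countable)
    (hdisj : 𝒟.Pairwise Disjoint) (hmeas : ∀ Q ∈ 𝒟, MeasurableSet Q) {𝒞 : Set (Set α)}
    (h𝒞 : 𝒞 ⊆ 𝒟) (hnonneg : ∀ Q ∈ 𝒞, 0 ≤ ∫ x in Q, h x ∂μ)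
    (hnonpos : ∀ Q ∈ 𝒟 \ 𝒞, ∫ x in Q, h x ∂μ ≤ 0) (hint𝒞 : IntegrableOn h (⋃₀ 𝒞) μ)
    {W : Set α} (hW : MeasurableSet W) (hintW : IntegrableOn h W μ)
    (hW𝒟 : ∀ Q ∈ 𝒟, Q ⊆ W ∨ Disjoint Q W) (hoff : ∀ᵐ x ∂μ, x ∈ W \ ⋃₀ 𝒟 → h x ≤ 0) :
    ∫ x in W, h x ∂μ ≤ ∫ x in ⋃₀ 𝒞, h x ∂μ := by
  have hU : MeasurableSet (⋃₀ 𝒟) := .sUnion h𝒟 hmeas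
  have hV : MeasurableSet (⋃₀ 𝒞) := .sUnion (h𝒟.mono h𝒞) fun Q hQ => hmeas Q (h𝒞 hQ)
  have hcell (Q) (hQ : Q ∈ 𝒟) :
      ∫ x in Q ∩ W, h x ∂μ ≤ ∫ x in Q ∩ ⋃₀ 𝒞, h x ∂μ := by
    by_cases hQ𝒞 : Q ∈ 𝒞
    · rw [inter_eq_left.2 (subset_sUnion_of_mem hQ𝒞)]
      rcases hW𝒟 Q hQ with hQW | hQW
      · rw [inter_eq_left.2 hQW]
      · simpa only [hQW.inter_eq, setIntegral_empty] using hnonneg Q hQ𝒞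
    · have hQV : Disjoint Q (⋃₀ 𝒞) := disjoint_sUnion_right.2 fun P hP =>
        hdisj hQ (h𝒞 hP) fun hQP => hQ𝒞 (hQP ▸ hP)
      rw [hQV.inter_eq, setIntegral_empty]
      rcases hW𝒟 Q hQ with hQW | hQW
      · rw [inter_eq_left.2 hQW]
        exact hnonpos Q ⟨hQ, hQ𝒞⟩
      · rw [hQW.inter_eq, setIntegral_empty]
  calc ∫ x in W, h x ∂μ
      = ∫ x in W ∩ ⋃₀ 𝒟, h x ∂μ + ∫ x in W \ ⋃₀ 𝒟, h x ∂μ :=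
        (integral_inter_add_sdiff hU hintW).symm
    _ ≤ ∫ x in ⋃₀ 𝒟 ∩ W, h x ∂μ := by
        rw [inter_comm]
        exact add_le_of_nonpos_right (setIntegral_nonpos_ae (hW.diff hU) hoff)
    _ ≤ ∫ x in ⋃₀ 𝒟 ∩ ⋃₀ 𝒞, h x ∂μ :=
        hasSum_le (fun Q : 𝒟 => hcell Q Q.2) (hasSum_setIntegral_inter h𝒟 hdisj hmeas hW hintW)
          (hasSum_setIntegral_inter h𝒟 hdisj hmeas hV hint𝒞)
    _ = ∫ x in ⋃₀ 𝒞, h x ∂μ := by rw [inter_eq_right.2 (sUnion_subset_sUnion h𝒞)]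

lemma setIntegral_sub_const {f : α → ℝ} {s : Set α} (hs : μ s ≠ ∞) (hf : IntegrableOn f s μ)
    (t : ℝ) : ∫ x in s, (f x - t) ∂μ = μ.real s * ((⨍ x in s, f x ∂μ) - t) := by
  rw [integral_sub hf (integrableOn_const hs), setIntegral_const, mul_sub, ← smul_eq_mul,
    ← smul_eq_mul, measure_smul_setAverage f hs]

lemma tendsto_integral_posPart_sub_atTop {f : α → ℝ} (hf : Integrable f μ) :
    Tendsto (fun t : ℝ => ∫ x, max (f x - t) 0 ∂μ) atTop (𝓝 0) := by
  suffices h : Tendsto (fun t : ℝ => ∫ x, max (f x - t) 0 ∂μ) atTop (𝓝 (∫ _, (0 : ℝ) ∂μ)) by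
    simpa only [integral_zero] using h
  refine tendsto_integral_filter_of_dominated_convergence (fun x => |f x|)
    (.of_forall fun t => (hf.aestronglyMeasurable.sub aestronglyMeasurable_const).sup
      aestronglyMeasurable_const) ?_ hf.abs (.of_forall fun x => ?_)
  · filter_upwards [eventually_ge_atTop 0] with t ht
    refine .of_forall fun x => ?_
    rw [Real.norm_of_nonneg (le_max_right _ _)]
    exact max_le (by linarith [le_abs_self (f x)]) (abs_nonneg _)
  · refine tendsto_const_nhds.congr' ?_
    filter_upwards [eventually_ge_atTop (f x)] with t ht
    exact (max_eq_right (sub_nonpos.2 ht)).symm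

end Measure

section OneSidedDerivative

variable {F v : ℝ → ℝ} {a b K : ℝ}

lemma sub_le_integral_of_forall_sub_le (hab : a ≤ b) (hv : IntervalIntegrable v volume a b)
    (hvK : ∀ t ∈ Icc a b, v t ≤ K)
    (hF : ∀ s ∈ Icc a b, ∀ t ∈ Icc s b, F s - F t ≤ (t - s) * v s) :
    F a - F b ≤ ∫ t in a..b, v t := by
  -- `F` need not be absolutely continuous, but `G` is increasing: it is differentiable almost
  -- everywhere, and the integral of its derivative is at most its increment.
  set G : ℝ → ℝ := fun t => F t + K * t
  have hG : MonotoneOn G (Icc a b) := fun s hs t ht hst => by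
    have hstep := hF s hs t ⟨hst, ht.2⟩
    have hbound := mul_le_mul_of_nonneg_left (hvK s hs) (sub_nonneg.2 hst)
    simp only [G]
    linarith
  have hderiv : ∀ᵐ t ∂volume.restrict (Icc a b), K - v t ≤ deriv G t := by
    rw [← restrict_Ioo_eq_restrict_Icc, ae_restrict_iff' measurableSet_Ioo]
    filter_upwards [hG.ae_differentiableWithinAt_of_mem] with t hdiff ht
    have hdiffAt := (hdiff (Ioo_subset_Icc_self ht)).differentiableAt (Icc_mem_nhds ht.1 ht.2)
    refine ge_of_tendsto ((hasDerivAt_iff_tendsto_slope.1 hdiffAt.hasDerivAt).mono_left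
      (nhdsGT_le_nhdsNE t)) ?_
    filter_upwards [Ioo_mem_nhdsGT ht.2] with s hs
    have hstep := hF t (Ioo_subset_Icc_self ht) s (Ioo_subset_Icc_self hs)
    rw [slope_def_field, le_div_iff₀ (sub_pos.2 hs.1)]
    simp only [G]
    linarith
  rw [← uIcc_of_le hab] at hG
  have hincr : ∫ t in a..b, deriv G t ≤ G b - G a := by
    have hmem := hG.intervalIntegral_deriv_mem_uIcc
    rw [uIcc_of_le (sub_nonneg.2 (hG left_mem_uIcc right_mem_uIcc hab))] at hmem
    exact hmem.2
  have hlower : ∫ t in a..b, (K - v t) ≤ ∫ t in a..b, deriv G t :=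
    intervalIntegral.integral_mono_ae_restrict hab (intervalIntegrable_const.sub hv)
      hG.intervalIntegrable_deriv hderiv
  rw [intervalIntegral.integral_sub intervalIntegrable_const hv, intervalIntegral.integral_const,
    smul_eq_mul] at hlower
  simp only [G] at hincr
  linarith

lemma ofReal_le_lintegral_Ioi_of_forall_sub_le (hv : Measurable v) (hv0 : ∀ t, 0 ≤ v t)
    (hvK : ∀ t, v t ≤ K) (hF : ∀ s t, s ≤ t → F s - F t ≤ (t - s) * v s)
    (hlim : Tendsto F atTop (𝓝 0)) :
    ENNReal.ofReal (F a) ≤ ∫⁻ t in Ioi a, ENNReal.ofReal (v t) := by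
  have htrunc (b : ℝ) (hab : a ≤ b) :
      ENNReal.ofReal (F a - F b) ≤ ∫⁻ t in Ioi a, ENNReal.ofReal (v t) := by
    have hvint : IntegrableOn v (Ioc a b) volume :=
      Measure.integrableOn_of_bounded measure_Ioc_lt_top.ne hv.aestronglyMeasurable
        (.of_forall fun t => (Real.norm_of_nonneg (hv0 t)).trans_le (hvK t))
    calc ENNReal.ofReal (F a - F b)
        ≤ ENNReal.ofReal (∫ t in a..b, v t) :=
          ENNReal.ofReal_le_ofReal <| sub_le_integral_of_forall_sub_le hab
            ((intervalIntegrable_iff_integrableOn_Ioc_of_le hab).2 hvint) (fun t _ => hvK t)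
            fun s _ t ht => hF s t ht.1
      _ = ∫⁻ t in Ioc a b, ENNReal.ofReal (v t) := by
          rw [intervalIntegral.integral_of_le hab,
            ofReal_integral_eq_lintegral_ofReal hvint (.of_forall hv0)]
      _ ≤ ∫⁻ t in Ioi a, ENNReal.ofReal (v t) := lintegral_mono_set Ioc_subset_Ioi_self
  refine le_of_tendsto (?_ : Tendsto (fun b => ENNReal.ofReal (F a - F b)) atTop _)
    ((eventually_ge_atTop a).mono htrunc)
  simpa only [sub_zero] using ENNReal.tendsto_ofReal (tendsto_const_nhds.sub hlim)

end OneSidedDerivative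

/-- The half-open cube of side length `2 ^ n` of the dyadic grid that contains `x`, encoded through
the integer parts of the rescaled coordinates so that nestedness becomes a statement about floors.
-/
def dyadicCell {d : ℕ} (n : ℤ) (x : Ed d) : Set (Ed d) :=
  {y | ∀ i, ⌊y i / (2 : ℝ) ^ n⌋ = ⌊x i / (2 : ℝ) ^ n⌋}

section DyadicCubes

variable {d : ℕ} {P Q Q₀ : Set (Ed d)} {x : Ed d}

lemma self_mem_dyadicCell (n : ℤ) (x : Ed d) : x ∈ dyadicCell n x := fun _ => rfl

lemma floor_div_two_zpow_add (n : ℤ) (k : ℕ) (t : ℝ) :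
    ⌊t / (2 : ℝ) ^ (n + k)⌋ = ⌊t / (2 : ℝ) ^ n⌋ / ((2 ^ k : ℕ) : ℤ) := by
  rw [← Int.floor_div_natCast, zpow_add₀ two_ne_zero, zpow_natCast, div_div, Nat.cast_pow,
    Nat.cast_ofNat]

lemma dyadicCell_mono (x : Ed d) : Monotone fun n => dyadicCell n x := by
  intro n m hnm y hy i
  obtain ⟨k, rfl⟩ := Int.le.dest hnm
  rw [floor_div_two_zpow_add, floor_div_two_zpow_add, hy i]

lemma floor_div_two_zpow_eq_iff {n m : ℤ} {t : ℝ} :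
    ⌊t / (2 : ℝ) ^ n⌋ = m ↔ t ∈ Ico ((2 : ℝ) ^ n * m) ((2 : ℝ) ^ n * (m + 1)) := by
  have hpos : (0 : ℝ) < 2 ^ n := by positivity
  rw [Int.floor_eq_iff, le_div_iff₀' hpos, div_lt_iff₀' hpos, mem_Ico]

lemma dyadicCell_eq_setOf_mem_Ico (n : ℤ) (x : Ed d) :
    dyadicCell n x = {y | ∀ i, y i ∈ Ico ((2 : ℝ) ^ n * ⌊x i / (2 : ℝ) ^ n⌋)
      ((2 : ℝ) ^ n * (⌊x i / (2 : ℝ) ^ n⌋ + 1))} := by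
  ext y
  exact forall_congr' fun i => floor_div_two_zpow_eq_iff

lemma isDyadicCube_dyadicCell (n : ℤ) (x : Ed d) : IsDyadicCube (dyadicCell n x) :=
  ⟨n, fun i => ⌊x i / (2 : ℝ) ^ n⌋, dyadicCell_eq_setOf_mem_Ico n x⟩

lemma IsDyadicCube.exists_eq_dyadicCell (hQ : IsDyadicCube Q) :
    ∃ n, ∀ x ∈ Q, Q = dyadicCell n x := by
  obtain ⟨n, m, rfl⟩ := hQ
  refine ⟨n, fun x hx => ?_⟩
  ext y
  refine forall_congr' fun i => ?_
  rw [← floor_div_two_zpow_eq_iff, floor_div_two_zpow_eq_iff.2 (hx i)]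

lemma IsDyadicCube.nonempty (hQ : IsDyadicCube Q) : Q.Nonempty := by
  obtain ⟨n, m, rfl⟩ := hQ
  refine ⟨WithLp.toLp 2 fun i => (2 : ℝ) ^ n * m i, fun i => ?_⟩
  rw [← floor_div_two_zpow_eq_iff, mul_div_cancel_left₀ _ (by positivity), Int.floor_intCast]

lemma countable_setOf_isDyadicCube : {Q : Set (Ed d) | IsDyadicCube Q}.Countable := by
  refine (countable_range fun p : ℤ × (Fin d → ℤ) => {x : Ed d | ∀ i,
    x i ∈ Ico ((2 : ℝ) ^ p.1 * p.2 i) ((2 : ℝ) ^ p.1 * (p.2 i + 1))}).mono ?_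
  rintro Q ⟨n, m, rfl⟩
  exact ⟨(n, m), rfl⟩

lemma setOf_forall_mem_Ico_eq_preimage (a b : Fin d → ℝ) :
    {x : Ed d | ∀ i, x i ∈ Ico (a i) (b i)} =
      WithLp.ofLp ⁻¹' univ.pi fun i => Ico (a i) (b i) := by
  ext x
  exact mem_univ_pi.symm

lemma IsDyadicCube.measurableSet (hQ : IsDyadicCube Q) : MeasurableSet Q := by
  obtain ⟨n, m, rfl⟩ := hQ
  rw [setOf_forall_mem_Ico_eq_preimage]
  exact (PiLp.volume_preserving_ofLp (Fin d)).measurable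
    (.univ_pi fun i => measurableSet_Ico)

lemma volume_dyadicCell (n : ℤ) (x : Ed d) :
    volume (dyadicCell n x) = ENNReal.ofReal ((2 : ℝ) ^ n) ^ d := by
  rw [dyadicCell_eq_setOf_mem_Ico, setOf_forall_mem_Ico_eq_preimage,
    (PiLp.volume_preserving_ofLp (Fin d)).measure_preimage
      (MeasurableSet.univ_pi fun i => measurableSet_Ico).nullMeasurableSet, Real.volume_pi_Ico]
  simp only [mul_add, mul_one, add_sub_cancel_left, Finset.prod_const, Finset.card_univ,
    Fintype.card_fin]

lemma volume_dyadicCell_add_one (n : ℤ) (x : Ed d) :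
    volume (dyadicCell (n + 1) x) = 2 ^ d * volume (dyadicCell n x) := by
  rw [volume_dyadicCell, volume_dyadicCell, ← mul_pow, zpow_add_one₀ two_ne_zero, mul_comm,
    ENNReal.ofReal_mul zero_le_two, ENNReal.ofReal_ofNat]

lemma IsDyadicCube.volume_ne_top (hQ : IsDyadicCube Q) : volume Q ≠ ∞ := by
  obtain ⟨x, hx⟩ := hQ.nonempty
  obtain ⟨n, hn⟩ := hQ.exists_eq_dyadicCell
  rw [hn x hx, volume_dyadicCell]
  exact ENNReal.pow_ne_top ENNReal.ofReal_ne_top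

lemma IsDyadicCube.subset_or_subset (hP : IsDyadicCube P) (hQ : IsDyadicCube Q) (hxP : x ∈ P)
    (hxQ : x ∈ Q) : P ⊆ Q ∨ Q ⊆ P := by
  obtain ⟨n, hn⟩ := hP.exists_eq_dyadicCell
  obtain ⟨m, hm⟩ := hQ.exists_eq_dyadicCell
  rw [hn x hxP, hm x hxQ]
  exact (le_total n m).imp (fun h => dyadicCell_mono x h) (fun h => dyadicCell_mono x h)

lemma IsDyadicCube.finite_setOf_between (hQ : IsDyadicCube Q) (hQ₀ : IsDyadicCube Q₀) :
    {P | IsDyadicCube P ∧ Q ⊆ P ∧ P ⊆ Q₀}.Finite := by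
  obtain ⟨x, hx⟩ := hQ.nonempty
  obtain ⟨k, hk⟩ := hQ.exists_eq_dyadicCell
  obtain ⟨n, hn⟩ := hQ₀.exists_eq_dyadicCell
  refine ((((finite_Icc k n).image fun j => dyadicCell j x).insert Q).insert Q₀).subset ?_
  rintro P ⟨hP, hQP, hPQ₀⟩
  obtain ⟨j, hj⟩ := hP.exists_eq_dyadicCell
  have hPj := hj x (hQP hx)
  have hQk := hk x hx
  have hQ₀n := hn x (hPQ₀ (hQP hx))
  rcases le_total n j with hnj | hjn
  · exact .inl (hPQ₀.antisymm (hPj ▸ hQ₀n ▸ dyadicCell_mono x hnj))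
  rcases le_total j k with hjk | hkj
  · exact .inr (.inl ((hQP.antisymm (hPj ▸ hQk ▸ dyadicCell_mono x hjk)).symm))
  · exact .inr (.inr ⟨j, ⟨hkj, hjn⟩, hPj.symm⟩)

lemma IsDyadicCube.exists_parent (hQ : IsDyadicCube Q) (hQ₀ : IsDyadicCube Q₀) (hlt : Q ⊂ Q₀) :
    ∃ P, IsDyadicCube P ∧ Q ⊂ P ∧ P ⊆ Q₀ ∧ volume P = 2 ^ d * volume Q := by
  obtain ⟨x, hx⟩ := hQ.nonempty
  obtain ⟨k, hk⟩ := hQ.exists_eq_dyadicCell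
  obtain ⟨n, hn⟩ := hQ₀.exists_eq_dyadicCell
  have hQ₀n := hn x (hlt.subset hx)
  have hscale (j : ℤ) (hj : Q = dyadicCell j x) : j < n := by
    by_contra! hnj
    exact hlt.not_subset (hQ₀n ▸ hj ▸ dyadicCell_mono x hnj)
  -- In dimension `0` all scales give the same cell, so the side length is not determined by `Q`.
  obtain ⟨j, hj, hmax⟩ := Int.exists_greatest_of_bdd (P := fun j => Q = dyadicCell j x)
    ⟨n, fun j hj => (hscale j hj).le⟩ ⟨k, hk x hx⟩
  refine ⟨dyadicCell (j + 1) x, isDyadicCube_dyadicCell _ x, ?_, ?_, ?_⟩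
  · refine ssubset_iff_subset_ne.2 ⟨?_, fun h => (hmax _ h).not_gt (lt_add_one j)⟩
    exact hj.trans_subset (dyadicCell_mono x (lt_add_one j).le)
  · exact hQ₀n ▸ dyadicCell_mono x (Int.add_one_le_of_lt (hscale j hj))
  · rw [volume_dyadicCell_add_one, ← hj]

lemma exists_dyadicCell_subset_of_isOpen {O : Set (Ed d)} (hO : IsOpen O) (hx : x ∈ O) (n₀ : ℤ) :
    ∃ n ≤ n₀, dyadicCell n x ⊆ O := by
  have hO' : IsOpen (WithLp.toLp 2 ⁻¹' O : Set (Fin d → ℝ)) :=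
    hO.preimage (PiLp.continuous_toLp 2 _)
  obtain ⟨ε, hε, hball⟩ := Metric.isOpen_iff.1 hO' (WithLp.ofLp x) hx
  obtain ⟨k, hk⟩ := exists_pow_lt_of_lt_one hε (one_half_lt_one (α := ℝ))
  refine ⟨min n₀ (-k), min_le_left _ _, fun y hy => hball (a := WithLp.ofLp y) ?_⟩
  have hside : (2 : ℝ) ^ min n₀ (-(k : ℤ)) < ε := by
    refine (zpow_le_zpow_right₀ one_le_two (min_le_right _ _)).trans_lt ?_
    simpa only [zpow_neg, zpow_natCast, one_div, inv_pow] using hk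
  have hpos : (0 : ℝ) < 2 ^ min n₀ (-(k : ℤ)) := by positivity
  rw [Metric.mem_ball, dist_pi_lt_iff hε]
  intro i
  have hfloor := Int.abs_sub_lt_one_of_floor_eq_floor (hy i)
  rw [← sub_div, abs_div, abs_of_pos hpos, div_lt_one hpos] at hfloor
  exact hfloor.trans hside

end DyadicCubes

/-- The maximal elements, with respect to inclusion, among the dyadic subcubes of `Q₀` with the
property `p`: the stopping cubes of the argument. -/
def maxDyadicSubcubes {d : ℕ} (Q₀ : Set (Ed d)) (p : Set (Ed d) → Prop) : Set (Set (Ed d)) :=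
  {Q | Maximal (fun P => IsDyadicCube P ∧ P ⊆ Q₀ ∧ p P) Q}

section MaxDyadicSubcubes

variable {d : ℕ} {P Q Q₀ : Set (Ed d)} {p q : Set (Ed d) → Prop} {𝒞 : Set (Set (Ed d))}

lemma mem_maxDyadicSubcubes : Q ∈ maxDyadicSubcubes Q₀ p ↔
    Maximal (fun P => IsDyadicCube P ∧ P ⊆ Q₀ ∧ p P) Q :=
  Iff.rfl

lemma isDyadicCube_of_mem_maxDyadicSubcubes (hQ : Q ∈ maxDyadicSubcubes Q₀ p) : IsDyadicCube Q :=
  (mem_maxDyadicSubcubes.1 hQ).prop.1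

lemma subset_of_mem_maxDyadicSubcubes (hQ : Q ∈ maxDyadicSubcubes Q₀ p) : Q ⊆ Q₀ :=
  (mem_maxDyadicSubcubes.1 hQ).prop.2.1

lemma prop_of_mem_maxDyadicSubcubes (hQ : Q ∈ maxDyadicSubcubes Q₀ p) : p Q :=
  (mem_maxDyadicSubcubes.1 hQ).prop.2.2

lemma eq_of_mem_maxDyadicSubcubes_of_subset (hQ : Q ∈ maxDyadicSubcubes Q₀ p)
    (hP : IsDyadicCube P) (hPQ₀ : P ⊆ Q₀) (hpP : p P) (hQP : Q ⊆ P) : P = Q :=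
  (mem_maxDyadicSubcubes.1 hQ).eq_of_superset ⟨hP, hPQ₀, hpP⟩ hQP

lemma isMaxSubcube_iff_mem_maxDyadicSubcubes {f : Ed d → ℝ} {t : ℝ} :
    IsMaxSubcube Q₀ f t Q ↔ Q ∈ maxDyadicSubcubes Q₀ fun P => t < ⨍ z in P, f z := by
  refine ⟨fun ⟨hQ, hQQ₀, hlt, hmax⟩ => mem_maxDyadicSubcubes.2 ⟨⟨hQ, hQQ₀, hlt⟩, ?_⟩, fun hQ =>
    ⟨isDyadicCube_of_mem_maxDyadicSubcubes hQ, subset_of_mem_maxDyadicSubcubes hQ,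
      prop_of_mem_maxDyadicSubcubes hQ, fun _ => eq_of_mem_maxDyadicSubcubes_of_subset hQ⟩⟩
  rintro P ⟨hP, hPQ₀, hltP⟩ hQP
  exact (hmax P hP hPQ₀ hltP hQP).subset

lemma exists_mem_maxDyadicSubcubes_superset (hQ₀ : IsDyadicCube Q₀) (hQ : IsDyadicCube Q)
    (hQQ₀ : Q ⊆ Q₀) (hp : p Q) : ∃ P ∈ maxDyadicSubcubes Q₀ p, Q ⊆ P := by
  have hfin : {P | (IsDyadicCube P ∧ P ⊆ Q₀ ∧ p P) ∧ Q ⊆ P}.Finite :=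
    (hQ.finite_setOf_between hQ₀).subset fun P hP => ⟨hP.1.1, hP.2, hP.1.2.1⟩
  obtain ⟨P, hQP, hP⟩ := hfin.exists_le_maximal ⟨⟨hQ, hQQ₀, hp⟩, subset_rfl⟩
  exact ⟨P, mem_maxDyadicSubcubes.2
    ⟨hP.prop.1, fun R hR hPR => hP.le_of_ge ⟨hR, hQP.trans hPR⟩ hPR⟩, hQP⟩

lemma pairwise_disjoint_maxDyadicSubcubes : (maxDyadicSubcubes Q₀ p).Pairwise Disjoint := by
  refine fun P hP Q hQ hne => disjoint_left.2 fun x hxP hxQ => hne ?_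
  have hP' := mem_maxDyadicSubcubes.1 hP
  have hQ' := mem_maxDyadicSubcubes.1 hQ
  rcases hP'.prop.1.subset_or_subset hQ'.prop.1 hxP hxQ with hPQ | hQP
  · exact hP'.eq_of_subset hQ'.prop hPQ
  · exact hQ'.eq_of_superset hP'.prop hQP

lemma countable_maxDyadicSubcubes : (maxDyadicSubcubes Q₀ p).Countable :=
  countable_setOf_isDyadicCube.mono fun _ => isDyadicCube_of_mem_maxDyadicSubcubes

lemma measurableSet_of_mem_maxDyadicSubcubes (hQ : Q ∈ maxDyadicSubcubes Q₀ p) :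
    MeasurableSet Q :=
  (isDyadicCube_of_mem_maxDyadicSubcubes hQ).measurableSet

lemma measure_inter_sUnion_of_subset_maxDyadicSubcubes {μ : Measure (Ed d)}
    (h𝒞 : 𝒞 ⊆ maxDyadicSubcubes Q₀ p) (E : Set (Ed d)) :
    μ (E ∩ ⋃₀ 𝒞) = ∑' Q : 𝒞, μ (E ∩ Q) :=
  measure_inter_sUnion (countable_maxDyadicSubcubes.mono h𝒞)
    (pairwise_disjoint_maxDyadicSubcubes.mono h𝒞)
    (fun _ hQ => measurableSet_of_mem_maxDyadicSubcubes (h𝒞 hQ)) E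

lemma measurableSet_sUnion_of_subset_maxDyadicSubcubes (h𝒞 : 𝒞 ⊆ maxDyadicSubcubes Q₀ p) :
    MeasurableSet (⋃₀ 𝒞) :=
  .sUnion (countable_maxDyadicSubcubes.mono h𝒞) fun _ hQ =>
    measurableSet_of_mem_maxDyadicSubcubes (h𝒞 hQ)

lemma sUnion_subset_of_subset_maxDyadicSubcubes (h𝒞 : 𝒞 ⊆ maxDyadicSubcubes Q₀ p) : ⋃₀ 𝒞 ⊆ Q₀ :=
  sUnion_subset fun _ hQ => subset_of_mem_maxDyadicSubcubes (h𝒞 hQ)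

lemma subset_sUnion_or_disjoint_of_imp (hQ₀ : IsDyadicCube Q₀) (hpq : ∀ P, p P → q P)
    (h𝒞 : 𝒞 ⊆ maxDyadicSubcubes Q₀ q) (hQ : Q ∈ maxDyadicSubcubes Q₀ p) :
    Q ⊆ ⋃₀ 𝒞 ∨ Disjoint Q (⋃₀ 𝒞) := by
  obtain ⟨P, hP, hQP⟩ := exists_mem_maxDyadicSubcubes_superset hQ₀
    (isDyadicCube_of_mem_maxDyadicSubcubes hQ) (subset_of_mem_maxDyadicSubcubes hQ)
    (hpq Q (prop_of_mem_maxDyadicSubcubes hQ))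
  by_cases hP𝒞 : P ∈ 𝒞
  · exact .inl (hQP.trans (subset_sUnion_of_mem hP𝒞))
  · exact .inr (disjoint_sUnion_right.2 fun R hR =>
      (pairwise_disjoint_maxDyadicSubcubes hP (h𝒞 hR) fun hPR => hP𝒞 (hPR ▸ hR)).mono_left hQP)

lemma measure_le_mul_measure_of_subset_isOpen {μ : Measure (Ed d)} (hQ₀ : IsDyadicCube Q₀)
    {E O : Set (Ed d)} (hEQ₀ : E ⊆ Q₀) (hEO : E ⊆ O) (hO : IsOpen O) {c : ℝ≥0∞}
    (hE : ∀ Q, IsDyadicCube Q → Q ⊆ Q₀ → μ (E ∩ Q) ≤ c * μ Q) : μ E ≤ c * μ O := by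
  set 𝒞 := maxDyadicSubcubes Q₀ (· ⊆ O)
  have hE𝒞 : E ⊆ ⋃₀ 𝒞 := by
    intro x hx
    obtain ⟨n₀, hn₀⟩ := hQ₀.exists_eq_dyadicCell
    obtain ⟨n, hn, hnO⟩ := exists_dyadicCell_subset_of_isOpen hO (hEO hx) n₀
    have hnQ₀ : dyadicCell n x ⊆ Q₀ := hn₀ x (hEQ₀ hx) ▸ dyadicCell_mono x hn
    obtain ⟨P, hP, hnP⟩ := exists_mem_maxDyadicSubcubes_superset (p := (· ⊆ O)) hQ₀
      (isDyadicCube_dyadicCell n x) hnQ₀ hnO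
    exact ⟨P, hP, hnP (self_mem_dyadicCell n x)⟩
  calc μ E = ∑' Q : 𝒞, μ (E ∩ Q) := by
        rw [← measure_inter_sUnion_of_subset_maxDyadicSubcubes subset_rfl, inter_eq_left.2 hE𝒞]
    _ ≤ ∑' Q : 𝒞, c * μ Q := ENNReal.tsum_le_tsum fun Q =>
        hE Q (isDyadicCube_of_mem_maxDyadicSubcubes Q.2) (subset_of_mem_maxDyadicSubcubes Q.2)
    _ = c * μ (⋃₀ 𝒞) := by
        rw [ENNReal.tsum_mul_left, measure_sUnion countable_maxDyadicSubcubes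
          pairwise_disjoint_maxDyadicSubcubes fun _ => measurableSet_of_mem_maxDyadicSubcubes]
    _ ≤ c * μ O := by
        gcongr
        exact sUnion_subset fun Q hQ => prop_of_mem_maxDyadicSubcubes (p := (· ⊆ O)) hQ

lemma measure_eq_zero_of_forall_dyadic_le {μ : Measure (Ed d)} [μ.OuterRegular]
    (hQ₀ : IsDyadicCube Q₀) {E : Set (Ed d)} (hEQ₀ : E ⊆ Q₀) (hEfin : μ E ≠ ∞) {c : ℝ≥0∞}
    (hc : c < 1) (hE : ∀ Q, IsDyadicCube Q → Q ⊆ Q₀ → μ (E ∩ Q) ≤ c * μ Q) : μ E = 0 := by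
  by_contra hE0
  have hlt : μ E < μ E / c := by
    rw [ENNReal.lt_div_iff_mul_lt (.inr hEfin) (.inr hE0)]
    simpa only [mul_one] using ENNReal.mul_lt_mul_right hE0 hEfin hc
  obtain ⟨O, hEO, hO, hμO⟩ := E.exists_isOpen_lt_of_lt _ hlt
  refine (measure_le_mul_measure_of_subset_isOpen hQ₀ hEQ₀ hEO hO hE).not_gt ?_
  rw [mul_comm]
  exact ENNReal.mul_lt_of_lt_div hμO

end MaxDyadicSubcubes

/-- The set `E` is thick in `Q` if it fills more than the fraction `2 ^ (-d-1)` of `Q`. With this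
threshold, `E` fills at most half of any dyadic cube whose dyadic parent it is not thick in. -/
def IsThick {d : ℕ} (E Q : Set (Ed d)) : Prop :=
  volume Q / 2 ^ (d + 1) < volume (E ∩ Q)

section Thickness

variable {d : ℕ} {Q Q₀ R E E' : Set (Ed d)}

lemma IsThick.mono (hEE' : E ⊆ E') (h : IsThick E Q) : IsThick E' Q :=
  h.trans_le (measure_mono (inter_subset_inter_left _ hEE'))

lemma IsThick.volume_le (h : IsThick E Q) : volume Q ≤ 2 ^ (d + 1) * volume (E ∩ Q) :=
  ENNReal.div_le_iff' (pow_ne_zero _ two_ne_zero) (ENNReal.pow_ne_top ENNReal.ofNat_ne_top)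
    |>.1 h.le

lemma volume_inter_sdiff_sUnion_isThick (hQ₀ : IsDyadicCube Q₀) (E : Set (Ed d)) :
    volume ((E ∩ Q₀) \ ⋃₀ maxDyadicSubcubes Q₀ (IsThick E)) = 0 := by
  have hsub : (E ∩ Q₀) \ ⋃₀ maxDyadicSubcubes Q₀ (IsThick E) ⊆ Q₀ :=
    sdiff_subset.trans inter_subset_right
  refine measure_eq_zero_of_forall_dyadic_le hQ₀ hsub
    (measure_ne_top_of_subset hsub hQ₀.volume_ne_top) (c := (2 ^ (d + 1))⁻¹)
    (ENNReal.inv_lt_one.2 (one_lt_pow₀ ENNReal.one_lt_two d.succ_ne_zero)) fun Q hQ hQQ₀ => ?_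
  by_cases hthick : IsThick E Q
  · obtain ⟨P, hP, hQP⟩ := exists_mem_maxDyadicSubcubes_superset hQ₀ hQ hQQ₀ hthick
    have hdisj : Disjoint ((E ∩ Q₀) \ ⋃₀ maxDyadicSubcubes Q₀ (IsThick E)) Q :=
      disjoint_sdiff_left.mono_right (hQP.trans (subset_sUnion_of_mem hP))
    rw [hdisj.inter_eq, measure_empty]
    exact zero_le
  · rw [mul_comm, ← div_eq_mul_inv]
    exact (measure_mono (inter_subset_inter_left _ fun x hx => hx.1.1)).trans (not_lt.1 hthick)

lemma volume_inter_le_half_of_not_isThick_parent {P : Set (Ed d)} (hQP : Q ⊆ P)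
    (hvol : volume P = 2 ^ d * volume Q) (hP : ¬ IsThick E P) :
    volume (E ∩ Q) ≤ volume Q / 2 :=
  calc volume (E ∩ Q) ≤ volume (E ∩ P) := by gcongr
    _ ≤ volume P / 2 ^ (d + 1) := not_lt.1 hP
    _ = volume Q / 2 := by
      rw [hvol, pow_succ]
      exact ENNReal.mul_div_mul_left _ _ (pow_ne_zero _ two_ne_zero)
        (ENNReal.pow_ne_top ENNReal.ofNat_ne_top)

lemma volume_inter_le_half_of_mem_maxDyadicSubcubes_subset (hQ₀ : IsDyadicCube Q₀)
    (hE : ¬ IsThick E Q₀) (hQ : Q ∈ maxDyadicSubcubes Q₀ (IsThick E)) (hR : IsDyadicCube R)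
    (hRQ₀ : R ⊆ Q₀) (hQR : Q ⊆ R) : volume (E ∩ R) ≤ volume R / 2 := by
  by_cases hthick : IsThick E R
  · obtain rfl := eq_of_mem_maxDyadicSubcubes_of_subset hQ hR hRQ₀ hthick hQR
    have hne : R ≠ Q₀ := fun h => hE (h ▸ hthick)
    obtain ⟨P, hP, hRP, hPQ₀, hvol⟩ := hR.exists_parent hQ₀ (hRQ₀.ssubset_of_ne hne)
    exact volume_inter_le_half_of_not_isThick_parent hRP.subset hvol fun h =>
      hRP.ne' (eq_of_mem_maxDyadicSubcubes_of_subset hQ hP hPQ₀ h hRP.subset)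
  · exact (not_lt.1 hthick).trans
      (ENNReal.div_le_div_left (le_self_pow₀ one_le_two d.succ_ne_zero) _)

end Thickness

/-- The maximal dyadic subcubes of `Q₀` in which `{f > t}` is thick, as far as the average of `f`
over them exceeds `t`. -/
def heavyCubes {d : ℕ} (Q₀ : Set (Ed d)) (f : Ed d → ℝ) (t : ℝ) : Set (Set (Ed d)) :=
  {Q ∈ maxDyadicSubcubes Q₀ (IsThick {x | t < f x}) | t < ⨍ z in Q, f z}

/-- The mass of `f - t` on the heavy cubes at level `t`. -/
def heavyExcess {d : ℕ} (Q₀ : Set (Ed d)) (f : Ed d → ℝ) (t : ℝ) : ℝ :=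
  ∫ x in ⋃₀ heavyCubes Q₀ f t, (f x - t)

section HeavyCubes

variable {d : ℕ} {Q Q₀ : Set (Ed d)} {f : Ed d → ℝ} {s t : ℝ}

lemma IsThick.superlevel_anti (hst : s ≤ t) (h : IsThick {x | t < f x} Q) :
    IsThick {x | s < f x} Q :=
  h.mono fun _ hx => hst.trans_lt hx

lemma heavyCubes_subset :
    heavyCubes Q₀ f t ⊆ maxDyadicSubcubes Q₀ (IsThick {x | t < f x}) :=
  fun _ hQ => hQ.1

lemma volume_sUnion_heavyCubes_le_volume_inter :
    volume (⋃₀ heavyCubes Q₀ f t) ≤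
      2 ^ (d + 1) * volume ({x | t < f x} ∩ ⋃₀ heavyCubes Q₀ f t) := by
  rw [← univ_inter (⋃₀ heavyCubes Q₀ f t),
    measure_inter_sUnion_of_subset_maxDyadicSubcubes heavyCubes_subset, univ_inter,
    measure_inter_sUnion_of_subset_maxDyadicSubcubes heavyCubes_subset, ← ENNReal.tsum_mul_left]
  refine ENNReal.tsum_le_tsum fun Q => ?_
  rw [univ_inter]
  exact (prop_of_mem_maxDyadicSubcubes (heavyCubes_subset Q.2)).volume_le

lemma volume_sUnion_heavyCubes_le (hQ₀ : IsDyadicCube Q₀) (hsmall : ¬ IsThick {x | t < f x} Q₀) :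
    volume (⋃₀ heavyCubes Q₀ f t) ≤ 2 ^ (d + 1) * volume ({x | t < f x} ∩
      ⋃₀ {P : Set (Ed d) | IsMaxSubcube Q₀ f t P ∧
        volume ({x | t < f x} ∩ P) ≤ volume P / 2}) := by
  refine volume_sUnion_heavyCubes_le_volume_inter.trans ?_
  gcongr 2 ^ (d + 1) * volume (_ ∩ ?_)
  rintro x ⟨Q, ⟨hQ, hlt⟩, hxQ⟩
  obtain ⟨P, hP, hQP⟩ := exists_mem_maxDyadicSubcubes_superset (p := fun P => t < ⨍ z in P, f z)
    hQ₀ (isDyadicCube_of_mem_maxDyadicSubcubes hQ) (subset_of_mem_maxDyadicSubcubes hQ) hlt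
  have hsparse : volume ({x | t < f x} ∩ P) ≤ volume P / 2 :=
    volume_inter_le_half_of_mem_maxDyadicSubcubes_subset hQ₀ hsmall hQ
      (isDyadicCube_of_mem_maxDyadicSubcubes hP) (subset_of_mem_maxDyadicSubcubes hP) hQP
  exact ⟨P, ⟨isMaxSubcube_iff_mem_maxDyadicSubcubes.2 hP, hsparse⟩, hQP hxQ⟩

lemma ordConnected_setOf_mem_heavyCubes : {t | Q ∈ heavyCubes Q₀ f t}.OrdConnected := by
  refine ordConnected_def.2 fun s hs t ht r hr => ?_
  have hQs := heavyCubes_subset hs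
  have hQt := heavyCubes_subset ht
  refine ⟨mem_maxDyadicSubcubes.2 ⟨⟨isDyadicCube_of_mem_maxDyadicSubcubes hQt,
    subset_of_mem_maxDyadicSubcubes hQt,
    (prop_of_mem_maxDyadicSubcubes hQt).superlevel_anti hr.2⟩, ?_⟩, hr.2.trans_lt ht.2⟩
  rintro P ⟨hP, hPQ₀, hthick⟩ hQP
  exact (eq_of_mem_maxDyadicSubcubes_of_subset hQs hP hPQ₀ (hthick.superlevel_anti hr.1) hQP).subset

lemma measurable_volume_sUnion_heavyCubes :
    Measurable fun t => volume (⋃₀ heavyCubes Q₀ f t) := by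
  have hgraph : MeasurableSet
      (⋃ Q ∈ {Q : Set (Ed d) | IsDyadicCube Q}, {t | Q ∈ heavyCubes Q₀ f t} ×ˢ Q) :=
    .biUnion countable_setOf_isDyadicCube fun Q hQ =>
      ordConnected_setOf_mem_heavyCubes.measurableSet.prod (IsDyadicCube.measurableSet hQ)
  convert measurable_measure_prodMk_left (ν := (volume : Measure (Ed d))) hgraph using 3 with t
  ext x
  simp only [mem_sUnion, mem_preimage, mem_iUnion, mem_prod, mem_ofPred_eq, exists_prop]
  exact ⟨fun ⟨Q, hQ, hx⟩ =>
      ⟨Q, isDyadicCube_of_mem_maxDyadicSubcubes (heavyCubes_subset hQ), hQ, hx⟩,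
    fun ⟨Q, _, hQ, hx⟩ => ⟨Q, hQ, hx⟩⟩

end HeavyCubes

section HeavyExcess

variable {d : ℕ} {Q₀ W : Set (Ed d)} {f : Ed d → ℝ} {s t : ℝ}

lemma measurableSet_sUnion_heavyCubes : MeasurableSet (⋃₀ heavyCubes Q₀ f t) :=
  measurableSet_sUnion_of_subset_maxDyadicSubcubes heavyCubes_subset

lemma sUnion_heavyCubes_subset : ⋃₀ heavyCubes Q₀ f t ⊆ Q₀ :=
  sUnion_subset_of_subset_maxDyadicSubcubes heavyCubes_subset

lemma volume_sUnion_heavyCubes_ne_top (hQ₀ : IsDyadicCube Q₀) :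
    volume (⋃₀ heavyCubes Q₀ f t) ≠ ∞ :=
  measure_ne_top_of_subset sUnion_heavyCubes_subset hQ₀.volume_ne_top

lemma IsDyadicCube.integrableOn_sub_const (hQ₀ : IsDyadicCube Q₀) (hf : IntegrableOn f Q₀)
    (t : ℝ) : IntegrableOn (fun x => f x - t) Q₀ :=
  hf.sub (integrableOn_const hQ₀.volume_ne_top)

lemma setIntegral_le_heavyExcess (hQ₀ : IsDyadicCube Q₀) (hf : IntegrableOn f Q₀)
    (hW : MeasurableSet W) (hWQ₀ : W ⊆ Q₀)
    (hWQ : ∀ Q ∈ maxDyadicSubcubes Q₀ (IsThick {x | t < f x}), Q ⊆ W ∨ Disjoint Q W) :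
    ∫ x in W, (f x - t) ≤ heavyExcess Q₀ f t := by
  have hint := hQ₀.integrableOn_sub_const hf t
  have haverage (Q) (hQ : Q ∈ maxDyadicSubcubes Q₀ (IsThick {x | t < f x})) :
      ∫ x in Q, (f x - t) = volume.real Q * ((⨍ x in Q, f x) - t) :=
    setIntegral_sub_const (isDyadicCube_of_mem_maxDyadicSubcubes hQ).volume_ne_top
      (hf.mono_set (subset_of_mem_maxDyadicSubcubes hQ)) t
  refine setIntegral_le_setIntegral_sUnion countable_maxDyadicSubcubes
    pairwise_disjoint_maxDyadicSubcubes (fun _ => measurableSet_of_mem_maxDyadicSubcubes)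
    heavyCubes_subset (fun Q hQ => ?_) (fun Q hQ => ?_) (hint.mono_set sUnion_heavyCubes_subset)
    hW (hint.mono_set hWQ₀) hWQ ?_
  · rw [haverage Q hQ.1]
    exact mul_nonneg measureReal_nonneg (sub_nonneg.2 hQ.2.le)
  · rw [haverage Q hQ.1]
    exact mul_nonpos_of_nonneg_of_nonpos measureReal_nonneg
      (sub_nonpos.2 (not_lt.1 fun hlt => hQ.2 ⟨hQ.1, hlt⟩))
  · filter_upwards [measure_eq_zero_iff_ae_notMem.1
      (volume_inter_sdiff_sUnion_isThick hQ₀ {x | t < f x})] with x hx hxW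
    exact sub_nonpos.2 (not_lt.1 fun hlt => hx ⟨⟨hlt, hWQ₀ hxW.1⟩, hxW.2⟩)

lemma heavyExcess_nonneg (hQ₀ : IsDyadicCube Q₀) (hf : IntegrableOn f Q₀) (t : ℝ) :
    0 ≤ heavyExcess Q₀ f t := by
  simpa only [setIntegral_empty] using setIntegral_le_heavyExcess hQ₀ hf .empty
    (empty_subset Q₀) fun Q _ => .inr (disjoint_empty Q)

lemma heavyExcess_le_integral_posPart (hQ₀ : IsDyadicCube Q₀) (hf : IntegrableOn f Q₀) (t : ℝ) :
    heavyExcess Q₀ f t ≤ ∫ x in Q₀, max (f x - t) 0 := by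
  have hint := hQ₀.integrableOn_sub_const hf t
  have hpos : IntegrableOn (fun x => max (f x - t) 0) Q₀ := hint.pos_part
  calc heavyExcess Q₀ f t
      ≤ ∫ x in ⋃₀ heavyCubes Q₀ f t, max (f x - t) 0 :=
        setIntegral_mono (hint.mono_set sUnion_heavyCubes_subset)
          (hpos.mono_set sUnion_heavyCubes_subset) fun x => le_max_left _ _
    _ ≤ ∫ x in Q₀, max (f x - t) 0 :=
        setIntegral_mono_set hpos (.of_forall fun x => le_max_right _ _)
          sUnion_heavyCubes_subset.eventuallyLE

lemma tendsto_heavyExcess_atTop (hQ₀ : IsDyadicCube Q₀) (hf : IntegrableOn f Q₀) :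
    Tendsto (heavyExcess Q₀ f) atTop (𝓝 0) :=
  tendsto_of_tendsto_of_tendsto_of_le_of_le tendsto_const_nhds
    (tendsto_integral_posPart_sub_atTop hf) (heavyExcess_nonneg hQ₀ hf)
    (heavyExcess_le_integral_posPart hQ₀ hf)

lemma heavyExcess_sub_le (hQ₀ : IsDyadicCube Q₀) (hf : IntegrableOn f Q₀) (hst : s ≤ t) :
    heavyExcess Q₀ f s - heavyExcess Q₀ f t ≤
      (t - s) * volume.real (⋃₀ heavyCubes Q₀ f s) := by
  have hV := volume_sUnion_heavyCubes_ne_top (f := f) (t := s) hQ₀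
  have hfV : IntegrableOn f (⋃₀ heavyCubes Q₀ f s) := hf.mono_set sUnion_heavyCubes_subset
  have hle : ∫ x in ⋃₀ heavyCubes Q₀ f s, (f x - t) ≤ heavyExcess Q₀ f t :=
    setIntegral_le_heavyExcess hQ₀ hf measurableSet_sUnion_heavyCubes sUnion_heavyCubes_subset
      fun Q => subset_sUnion_or_disjoint_of_imp hQ₀ (fun P hP => hP.superlevel_anti hst)
        heavyCubes_subset
  rw [setIntegral_sub_const hV hfV] at hle
  rw [heavyExcess, setIntegral_sub_const hV hfV]
  linarith

lemma ofReal_heavyExcess_le_lintegral (hQ₀ : IsDyadicCube Q₀) (hf : IntegrableOn f Q₀) (s : ℝ) :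
    ENNReal.ofReal (heavyExcess Q₀ f s) ≤ ∫⁻ t in Ioi s, volume (⋃₀ heavyCubes Q₀ f t) := by
  have hbound := ofReal_le_lintegral_Ioi_of_forall_sub_le (F := heavyExcess Q₀ f) (a := s)
    (v := fun t => volume.real (⋃₀ heavyCubes Q₀ f t)) (K := volume.real Q₀)
    measurable_volume_sUnion_heavyCubes.ennreal_toReal (fun _ => measureReal_nonneg)
    (fun _ => measureReal_mono sUnion_heavyCubes_subset hQ₀.volume_ne_top)
    (fun _ _ => heavyExcess_sub_le hQ₀ hf) (tendsto_heavyExcess_atTop hQ₀ hf)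
  simpa only [ofReal_measureReal (volume_sUnion_heavyCubes_ne_top hQ₀)] using hbound

end HeavyExcess

/-- If `|{f > λ₀} ∩ Q₀| ≤ 2^{-d-1}|Q₀|` then
`|Q₀| (f_{Q₀} − λ₀) ≤ 2^{d+1} ∫_{λ₀}^∞ |{f > λ} ∩ ⋃{P ∈ 𝒬_λ : |{f > λ} ∩ P| ≤ |P|/2}| dλ`,
where `𝒬_λ` is the family of maximal dyadic subcubes `P ⊆ Q₀` with `⨍_P f > λ`. -/
theorem mass_in_sparse_maximal_cubes {d : ℕ} (hd : 1 ≤ d)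
    (Q₀ : Set (Ed d)) (hQ₀ : IsDyadicCube Q₀) (lam₀ : ℝ) (f : Ed d → ℝ)
    (hf : IntegrableOn f Q₀ volume)
    (hsmall : volume ({x | lam₀ < f x} ∩ Q₀) ≤ volume Q₀ / 2 ^ (d + 1)) :
    ENNReal.ofReal ((volume Q₀).toReal * ((⨍ z in Q₀, f z) - lam₀)) ≤
      2 ^ (d + 1) *
        ∫⁻ lam in Set.Ioi lam₀,
          volume ({x | lam < f x} ∩
            ⋃₀ {P : Set (Ed d) | IsMaxSubcube Q₀ f lam P ∧
              volume ({x | lam < f x} ∩ P) ≤ volume P / 2}) := by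
  rw [← measureReal_def, ← setIntegral_sub_const hQ₀.volume_ne_top hf,
    ← lintegral_const_mul' _ _ (ENNReal.pow_ne_top ENNReal.ofNat_ne_top)]
  calc ENNReal.ofReal (∫ x in Q₀, (f x - lam₀))
      ≤ ENNReal.ofReal (heavyExcess Q₀ f lam₀) :=
        ENNReal.ofReal_le_ofReal <| setIntegral_le_heavyExcess hQ₀ hf hQ₀.measurableSet
          subset_rfl fun _ hQ => .inl (subset_of_mem_maxDyadicSubcubes hQ)
    _ ≤ ∫⁻ lam in Ioi lam₀, volume (⋃₀ heavyCubes Q₀ f lam) :=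
        ofReal_heavyExcess_le_lintegral hQ₀ hf lam₀
    _ ≤ _ := setLIntegral_mono' measurableSet_Ioi fun lam hlam =>
        volume_sUnion_heavyCubes_le hQ₀ fun hthick =>
          (hthick.superlevel_anti (le_of_lt hlam)).not_ge hsmall

end
end

section
/- Let d ≥ 1, let Q ⊆ ℝ^d be a dyadic cube, and let f ∈ L¹(Q) be nonnegative with var_{interior(Q)} f < ∞. Define M_Q f(x) = sup { f_P : P a dyadic cube with x ∈ P ⊆ Q }. Then there is a constant C depending only on d such that ∫_Q M_Q f ≤ C · ( ∫_Q f + |Q|^{1/d} · var_{interior(Q)} f ). -/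
open MeasureTheory Metric Set Filter
open scoped ENNReal Topology

noncomputable section

/-- Divergence of a vector field `φ : ℝ^d → ℝ^d`. -/
def divergence {d : ℕ} (φ : Ed d → Ed d) (x : Ed d) : ℝ :=
  ∑ i, fderiv ℝ φ x (EuclideanSpace.single i 1) i

/-- The variation of `f` in `Ω`. -/
def var {d : ℕ} (Ω : Set (Ed d)) (f : Ed d → ℝ) : ℝ≥0∞ :=
  ⨆ φ ∈ {φ : Ed d → Ed d | ContDiff ℝ 1 φ ∧ HasCompactSupport φ ∧ tsupport φ ⊆ Ω ∧
      ∀ x, ‖φ x‖ ≤ 1},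
    ENNReal.ofReal (∫ x in Ω, f x * divergence φ x)

/-- The dyadic maximal function restricted to subcubes of `Q`:
`M_Q f(x) = sup { ⨍_P f : P dyadic cube, x ∈ P ⊆ Q }`. -/
def dyadicMaxFunIn {d : ℕ} (Q : Set (Ed d)) (f : Ed d → ℝ) (x : Ed d) : ℝ :=
  sSup {y : ℝ | ∃ P : Set (Ed d), IsDyadicCube P ∧ x ∈ P ∧ P ⊆ Q ∧ y = ⨍ z in P, f z}

/-!
Along the dyadic cubes containing a point `x`, the averages of `f` telescope, so `M_Q f x - f_Q` is
at most the sum over the scales of the increases of the average from a cube to its child. Among the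
children of a cube one has at most the average of the parent, and any other child is a translate of
it by a vector `v` of length comparable to the side. By the mean value theorem, translating a cutoff
`ψ` of the child by `v` changes `∫ f ψ` by `∫ f div φ` for a field `φ = ψ(· - t v) v` supported in
the convex parent, hence by at most `‖v‖` times the variation there. Superadditivity of the
variation bounds the integral over `Q` of the increases at side length `2 ^ k` by a dimensional
constant times `2 ^ k * var (interior Q) f`, and these bounds form a geometric series in `k`.
-/

section Calculus

variable {E : Type*} [NormedAddCommGroup E] [NormedSpace ℝ E]

lemma exists_contDiff_eqOn_one_of_isCompact [FiniteDimensional ℝ E] {n : ℕ∞} {K U : Set E}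
    (hK : IsCompact K) (hU : IsOpen U) (hKU : K ⊆ U) :
    ∃ ψ : E → ℝ, ContDiff ℝ n ψ ∧ HasCompactSupport ψ ∧ tsupport ψ ⊆ U ∧
      (∀ x, ψ x ∈ Icc 0 1) ∧ EqOn ψ 1 K := by
  obtain ⟨L, hL, hKL, hLU⟩ := exists_compact_between hK hU hKU
  obtain ⟨ψ, hψ, hrange, hsupp, hone⟩ := exists_contMDiff_support_eq_eq_one_iff
    (modelWithCornersSelf ℝ E) (n := n) isOpen_interior hK.isClosed hKL
  have hψL : tsupport ψ ⊆ L := by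
    rw [tsupport, hsupp]
    exact closure_minimal interior_subset hL.isClosed
  exact ⟨ψ, hψ.contDiff, hL.of_isClosed_subset (isClosed_tsupport _) hψL, hψL.trans hLU,
    fun x ↦ hrange (mem_range_self x), fun x hx ↦ (hone x).1 hx⟩

lemma exists_seq_contDiff_tendsto_indicator [FiniteDimensional ℝ E] {n : ℕ∞} {U : Set E}
    (hU : IsOpen U) :
    ∃ ψ : ℕ → E → ℝ, (∀ j, ContDiff ℝ n (ψ j) ∧ HasCompactSupport (ψ j) ∧ tsupport (ψ j) ⊆ U ∧
      ∀ x, ψ j x ∈ Icc 0 1) ∧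
      ∀ x, Tendsto (fun j ↦ ψ j x) atTop (𝓝 (U.indicator 1 x)) := by
  have := hU.locallyCompactSpace
  let K : CompactExhaustion U := default
  choose ψ hψ hc hs h01 hone using fun j ↦ exists_contDiff_eqOn_one_of_isCompact (n := n)
    ((K.isCompact j).image continuous_subtype_val) hU (Subtype.coe_image_subset U (K j))
  refine ⟨ψ, fun j ↦ ⟨hψ j, hc j, hs j, h01 j⟩, fun x ↦ tendsto_const_nhds.congr' ?_⟩
  by_cases hx : x ∈ U
  · obtain ⟨j₀, hj₀⟩ := K.exists_mem ⟨x, hx⟩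
    filter_upwards [eventually_ge_atTop j₀] with j hj
    rw [indicator_of_mem hx, hone j (mem_image_of_mem _ (K.subset hj hj₀))]
  · refine Eventually.of_forall fun j ↦ ?_
    rw [indicator_of_notMem hx]
    exact (image_eq_zero_of_notMem_tsupport fun h ↦ hx (hs j h)).symm

lemma hasDerivAt_integral_mul_comp_sub_smul [MeasurableSpace E] [OpensMeasurableSpace E]
    {μ : Measure E} {f ψ : E → ℝ} (hf : Integrable f μ) (hψ : ContDiff ℝ 1 ψ)
    (hc : HasCompactSupport ψ) (v : E) (t : ℝ) :
    HasDerivAt (fun s : ℝ ↦ ∫ x, f x * ψ (x - s • v) ∂μ)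
      (∫ x, f x * -fderiv ℝ ψ (x - t • v) v ∂μ) t := by
  have hψ' : Continuous (fderiv ℝ ψ) := hψ.continuous_fderiv one_ne_zero
  obtain ⟨A, hA⟩ := hψ.continuous.bounded_above_of_compact_support hc
  obtain ⟨B, hB⟩ := hψ'.bounded_above_of_compact_support (hc.fderiv (𝕜 := ℝ))
  have hψm (s : ℝ) : AEStronglyMeasurable (fun x ↦ ψ (x - s • v)) μ :=
    (hψ.continuous.comp (continuous_sub_right _)).aestronglyMeasurable
  have hψm' : AEStronglyMeasurable (fun x ↦ -fderiv ℝ ψ (x - t • v) v) μ :=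
    Continuous.aestronglyMeasurable (by fun_prop)
  refine (hasDerivAt_integral_of_dominated_loc_of_deriv_le
    (F' := fun s x ↦ f x * -fderiv ℝ ψ (x - s • v) v) (bound := fun x ↦ ‖f x‖ * (B * ‖v‖))
    univ_mem (Eventually.of_forall fun s ↦ hf.aestronglyMeasurable.mul (hψm s))
    (hf.mul_bdd (hψm t) (Eventually.of_forall fun x ↦ hA _))
    (hf.aestronglyMeasurable.mul hψm') (Eventually.of_forall fun x s _ ↦ ?_)
    (hf.norm.mul_const _) (Eventually.of_forall fun x s _ ↦ ?_)).2
  · rw [norm_mul, norm_neg]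
    gcongr
    exact (fderiv ℝ ψ _).le_of_opNorm_le (hB _) v
  · have hline : HasDerivAt (fun s : ℝ ↦ x - s • v) (-v) s := by
      simpa using ((hasDerivAt_id s).smul_const v).const_sub x
    have hcomp := (hψ.differentiable one_ne_zero (x - s • v)).hasFDerivAt.comp_hasDerivAt s hline
    rw [map_neg] at hcomp
    exact hcomp.const_mul (f x)

end Calculus

lemma tendsto_setIntegral_mul_of_tendsto_indicator {α : Type*} [MeasurableSpace α] {μ : Measure α}
    {f : α → ℝ} {A W : Set α} {g : ℕ → α → ℝ} (hf : IntegrableOn f W μ) (hA : MeasurableSet A)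
    (hAW : A ⊆ W) (hgm : ∀ j, AEStronglyMeasurable (g j) (μ.restrict W))
    (hg1 : ∀ j x, ‖g j x‖ ≤ 1) (hg : ∀ x, Tendsto (fun j ↦ g j x) atTop (𝓝 (A.indicator 1 x))) :
    Tendsto (fun j ↦ ∫ x in W, f x * g j x ∂μ) atTop (𝓝 (∫ x in A, f x ∂μ)) := by
  have hlim : ∫ x in W, f x * A.indicator 1 x ∂μ = ∫ x in A, f x ∂μ := by
    simp_rw [← indicator_mul_right A f, Pi.one_apply, mul_one]
    rw [setIntegral_indicator hA, inter_eq_right.2 hAW]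
  rw [← hlim]
  refine tendsto_integral_of_dominated_convergence (fun x ↦ ‖f x‖)
    (fun j ↦ hf.aestronglyMeasurable.mul (hgm j)) hf.norm
    (fun j ↦ Eventually.of_forall fun x ↦ ?_)
    (Eventually.of_forall fun x ↦ (hg x).const_mul (f x))
  rw [norm_mul]
  exact mul_le_of_le_one_right (norm_nonneg _) (hg1 j x)

lemma ofReal_integral_le_lintegral_ofReal {α : Type*} [MeasurableSpace α] {μ : Measure α}
    {f : α → ℝ} (hf : Integrable f μ) :
    ENNReal.ofReal (∫ x, f x ∂μ) ≤ ∫⁻ x, ENNReal.ofReal (f x) ∂μ := by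
  rw [integral_eq_lintegral_pos_part_sub_lintegral_neg_part hf]
  exact ENNReal.ofReal_le_of_le_toReal (sub_le_self _ ENNReal.toReal_nonneg)

lemma ofReal_setAverage_mul_measure_le {α : Type*} [MeasurableSpace α] {μ : Measure α} {s : Set α}
    {f : α → ℝ} (hs : μ s ≠ ∞) (hf : IntegrableOn f s μ) :
    ENNReal.ofReal (⨍ x in s, f x ∂μ) * μ s ≤ ∫⁻ x in s, ENNReal.ofReal (f x) ∂μ := by
  rw [← ofReal_measureReal hs, ← ENNReal.ofReal_mul' measureReal_nonneg, mul_comm, ← smul_eq_mul,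
    measure_smul_setAverage f hs]
  exact ofReal_integral_le_lintegral_ofReal hf

lemma ofReal_add_ofReal_le {a b : ℝ} {c : ℝ≥0∞} (ha : ENNReal.ofReal a ≤ c)
    (hb : ENNReal.ofReal b ≤ c) (hab : ENNReal.ofReal (a + b) ≤ c) :
    ENNReal.ofReal a + ENNReal.ofReal b ≤ c := by
  rcases le_total a 0 with ha0 | ha0
  · rwa [ENNReal.ofReal_of_nonpos ha0, zero_add]
  rcases le_total b 0 with hb0 | hb0
  · rwa [ENNReal.ofReal_of_nonpos hb0, add_zero]
  rwa [← ENNReal.ofReal_add ha0 hb0]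

section Divergence

variable {d : ℕ} {φ χ : Ed d → Ed d}

lemma divergence_add (hφ : Differentiable ℝ φ) (hχ : Differentiable ℝ χ) :
    divergence (φ + χ) = divergence φ + divergence χ := by
  ext x
  simp [divergence, fderiv_add (hφ x) (hχ x), Finset.sum_add_distrib]

lemma divergence_const_smul (hφ : Differentiable ℝ φ) (c : ℝ) :
    divergence (c • φ) = c • divergence φ := by
  ext x
  simp [divergence, fderiv_const_smul (hφ x), Finset.mul_sum]

lemma divergence_smul_const {w : Ed d → ℝ} {x : Ed d} (hw : DifferentiableAt ℝ w x) (v : Ed d) :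
    divergence (fun y ↦ w y • v) x = fderiv ℝ w x v := by
  have hv : v = ∑ i, v i • EuclideanSpace.single i (1:ℝ) := by
    simpa using ((EuclideanSpace.basisFun (Fin d) ℝ).sum_repr v).symm
  conv_rhs => rw [hv]
  simp [divergence, (hw.hasFDerivAt.smul_const v).fderiv, mul_comm]

lemma divergence_eq_zero_of_notMem_tsupport {x : Ed d} (hx : x ∉ tsupport φ) :
    divergence φ x = 0 := by
  simp [divergence, fderiv_of_notMem_tsupport (𝕜 := ℝ) hx]

end Divergence

/-- A test field in `Ω`: an element of `C¹_c(Ω; ℝ^d)`. The normalization `‖φ‖ ≤ 1` in the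
definition of `var` is kept apart, so that test fields form a vector space. -/
structure IsTestField {d : ℕ} (Ω : Set (Ed d)) (φ : Ed d → Ed d) : Prop where
  contDiff : ContDiff ℝ 1 φ
  hasCompactSupport : HasCompactSupport φ
  tsupport_subset : tsupport φ ⊆ Ω

namespace IsTestField

variable {d : ℕ} {U Ω : Set (Ed d)} {f : Ed d → ℝ} {φ χ : Ed d → Ed d}

lemma zero (Ω : Set (Ed d)) : IsTestField Ω 0 :=
  ⟨contDiff_const, HasCompactSupport.zero, by simp [tsupport]⟩

lemma mono (hφ : IsTestField U φ) (hU : U ⊆ Ω) : IsTestField Ω φ :=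
  ⟨hφ.contDiff, hφ.hasCompactSupport, hφ.tsupport_subset.trans hU⟩

lemma add (hφ : IsTestField Ω φ) (hχ : IsTestField Ω χ) : IsTestField Ω (φ + χ) :=
  ⟨hφ.contDiff.add hχ.contDiff, hφ.hasCompactSupport.add hχ.hasCompactSupport,
    (tsupport_add φ χ).trans (union_subset hφ.tsupport_subset hχ.tsupport_subset)⟩

lemma const_smul (hφ : IsTestField Ω φ) (c : ℝ) : IsTestField Ω (c • φ) :=
  ⟨hφ.contDiff.const_smul c, hφ.hasCompactSupport.smul_left (f := fun _ ↦ c),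
    (tsupport_smul_subset_right (fun _ ↦ c) φ).trans hφ.tsupport_subset⟩

lemma differentiable (hφ : IsTestField Ω φ) : Differentiable ℝ φ :=
  hφ.contDiff.differentiable one_ne_zero

lemma eq_zero_of_notMem (hφ : IsTestField Ω φ) {x : Ed d} (hx : x ∉ Ω) : φ x = 0 :=
  image_eq_zero_of_notMem_tsupport fun h ↦ hx (hφ.tsupport_subset h)

lemma continuous_divergence (hφ : IsTestField Ω φ) : Continuous (divergence φ) := by
  have := hφ.contDiff.continuous_fderiv one_ne_zero
  unfold divergence
  fun_prop

lemma integrableOn_mul_divergence (hφ : IsTestField U φ) (hf : IntegrableOn f Ω) :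
    IntegrableOn (fun x ↦ f x * divergence φ x) Ω := by
  obtain ⟨B, hB⟩ := hφ.continuous_divergence.bounded_above_of_compact_support
    (HasCompactSupport.intro hφ.hasCompactSupport fun _ ↦ divergence_eq_zero_of_notMem_tsupport)
  exact hf.mul_bdd hφ.continuous_divergence.aestronglyMeasurable (Eventually.of_forall hB)

lemma setIntegral_mul_divergence_eq (hφ : IsTestField U φ) (hΩ : MeasurableSet Ω) (hU : U ⊆ Ω) :
    ∫ x in U, f x * divergence φ x = ∫ x in Ω, f x * divergence φ x := by
  refine (setIntegral_eq_of_subset_of_forall_sdiff_eq_zero hΩ hU fun x hx ↦ ?_).symm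
  rw [divergence_eq_zero_of_notMem_tsupport fun h ↦ hx.2 (hφ.tsupport_subset h), mul_zero]

lemma ofReal_integral_le_var (hφ : IsTestField Ω φ) (hφ1 : ∀ x, ‖φ x‖ ≤ 1) :
    ENNReal.ofReal (∫ x in Ω, f x * divergence φ x) ≤ var Ω f :=
  le_iSup₂_of_le φ ⟨hφ.1, hφ.2, hφ.3, hφ1⟩ le_rfl

lemma ofReal_integral_le_mul_var (hφ : IsTestField Ω φ) {c : ℝ} (hφc : ∀ x, ‖φ x‖ ≤ c) :
    ENNReal.ofReal (∫ x in Ω, f x * divergence φ x) ≤ ENNReal.ofReal c * var Ω f := by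
  rcases ((norm_nonneg _).trans (hφc 0)).eq_or_lt with rfl | hc
  · have hφ0 : φ = 0 := funext fun x ↦ norm_le_zero_iff.1 (hφc x)
    simp [hφ0, divergence]
  have hnorm (x) : ‖(c⁻¹ • φ) x‖ ≤ 1 := by
    rw [Pi.smul_apply, norm_smul, norm_inv, Real.norm_of_nonneg hc.le]
    exact inv_mul_le_one_of_le₀ (hφc x) hc.le
  calc ENNReal.ofReal (∫ x in Ω, f x * divergence φ x)
      = ENNReal.ofReal (c * ∫ x in Ω, f x * divergence (c⁻¹ • φ) x) := by
        simp_rw [divergence_const_smul hφ.differentiable, Pi.smul_apply, mul_smul_comm,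
          integral_smul, smul_eq_mul, mul_inv_cancel_left₀ hc.ne']
    _ = ENNReal.ofReal c * ENNReal.ofReal (∫ x in Ω, f x * divergence (c⁻¹ • φ) x) :=
        ENNReal.ofReal_mul hc.le
    _ ≤ ENNReal.ofReal c * var Ω f := by
        gcongr
        exact (hφ.const_smul c⁻¹).ofReal_integral_le_var hnorm

end IsTestField

section Variation

variable {d : ℕ} {U V Ω : Set (Ed d)} {f : Ed d → ℝ}

lemma var_mono (hΩ : MeasurableSet Ω) (hU : U ⊆ Ω) : var U f ≤ var Ω f := by
  refine iSup₂_le fun φ ⟨hφ, hc, hs, hφ1⟩ ↦ ?_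
  have hφU : IsTestField U φ := ⟨hφ, hc, hs⟩
  rw [hφU.setIntegral_mul_divergence_eq hΩ hU]
  exact (hφU.mono hU).ofReal_integral_le_var hφ1

lemma var_add_var_le (hU : MeasurableSet U) (hV : MeasurableSet V) (hUV : Disjoint U V)
    (hf : IntegrableOn f (U ∪ V)) : var U f + var V f ≤ var (U ∪ V) f := by
  have hm : MeasurableSet (U ∪ V) := hU.union hV
  have hzero (Ω : Set (Ed d)) : ∃ φ : Ed d → Ed d, ContDiff ℝ 1 φ ∧ HasCompactSupport φ ∧
      tsupport φ ⊆ Ω ∧ ∀ x, ‖φ x‖ ≤ 1 :=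
    ⟨0, (IsTestField.zero Ω).1, (IsTestField.zero Ω).2, (IsTestField.zero Ω).3, by simp⟩
  refine ENNReal.biSup_add_biSup_le' (hzero U) (hzero V)
    fun φ ⟨hφ, hφc, hφs, hφ1⟩ χ ⟨hχ, hχc, hχs, hχ1⟩ ↦ ?_
  have hφU : IsTestField U φ := ⟨hφ, hφc, hφs⟩
  have hχV : IsTestField V χ := ⟨hχ, hχc, hχs⟩
  have hφΩ := hφU.mono (Ω := U ∪ V) subset_union_left
  have hχΩ := hχV.mono (Ω := U ∪ V) subset_union_right
  have hnorm (x) : ‖(φ + χ) x‖ ≤ 1 := by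
    by_cases hx : x ∈ U
    · simpa [hχV.eq_zero_of_notMem (hUV.notMem_of_mem_left hx)] using hφ1 x
    · simpa [hφU.eq_zero_of_notMem hx] using hχ1 x
  rw [hφU.setIntegral_mul_divergence_eq hm subset_union_left,
    hχV.setIntegral_mul_divergence_eq hm subset_union_right]
  refine ofReal_add_ofReal_le (hφΩ.ofReal_integral_le_var hφ1) (hχΩ.ofReal_integral_le_var hχ1) ?_
  rw [← integral_add (hφΩ.integrableOn_mul_divergence hf) (hχΩ.integrableOn_mul_divergence hf)]
  simpa [divergence_add hφΩ.differentiable hχΩ.differentiable, mul_add] using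
    (hφΩ.add hχΩ).ofReal_integral_le_var hnorm (f := f)

lemma sum_var_le {ι : Type*} (s : Finset ι) {W : ι → Set (Ed d)}
    (hW : ∀ i, MeasurableSet (W i)) (hdisj : Pairwise (Function.onFun Disjoint W))
    (hf : IntegrableOn f (⋃ i ∈ s, W i)) : ∑ i ∈ s, var (W i) f ≤ var (⋃ i ∈ s, W i) f := by
  classical
  induction s using Finset.induction_on with
  | empty => simp
  | insert a s ha ih =>
    rw [Finset.set_biUnion_insert] at hf ⊢
    rw [Finset.sum_insert ha]
    refine (add_le_add_right (ih (hf.mono_set subset_union_right)) _).trans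
      (var_add_var_le (hW a) (s.measurableSet_biUnion fun i _ ↦ hW i) ?_ hf)
    exact disjoint_iUnion₂_right.2 fun i hi ↦ hdisj (ne_of_mem_of_not_mem hi ha).symm

lemma tsum_var_le {ι : Type*} {W : ι → Set (Ed d)} (hW : ∀ i, MeasurableSet (W i))
    (hdisj : Pairwise (Function.onFun Disjoint W)) (hΩ : MeasurableSet Ω) (hWΩ : ∀ i, W i ⊆ Ω)
    (hf : IntegrableOn f Ω) : ∑' i, var (W i) f ≤ var Ω f := by
  rw [ENNReal.tsum_eq_iSup_sum]
  refine iSup_le fun s ↦ ?_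
  have hsΩ : ⋃ i ∈ s, W i ⊆ Ω := iUnion₂_subset fun i _ ↦ hWΩ i
  exact (sum_var_le s hW hdisj (hf.mono_set hsΩ)).trans (var_mono hΩ hsΩ)

end Variation

section Translation

open scoped Pointwise

variable {d : ℕ} {U W : Set (Ed d)} {v : Ed d} {f : Ed d → ℝ} {ψ : Ed d → ℝ}

lemma IsTestField.comp_sub_smul_const {t : ℝ} (hψ : ContDiff ℝ 1 ψ) (hc : HasCompactSupport ψ)
    (hW : Convex ℝ W) (hψW : tsupport ψ ⊆ W) (hvW : ∀ x ∈ tsupport ψ, x + v ∈ W)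
    (ht : t ∈ Icc (0 : ℝ) 1) : IsTestField W (fun x ↦ ψ (x - t • v) • v) := by
  refine ⟨by fun_prop, (hc.comp_homeomorph (Homeomorph.subRight (t • v))).smul_right,
    (tsupport_smul_subset_left (fun x ↦ ψ (x - t • v)) _).trans fun x hx ↦ ?_⟩
  have hx' : x - t • v ∈ tsupport ψ := by
    rwa [show (fun x ↦ ψ (x - t • v)) = ψ ∘ Homeomorph.subRight (t • v) from rfl,
      tsupport_comp_eq_preimage] at hx
  simpa using hW.add_smul_mem (hψW hx') (hvW _ hx') ht

/- By the mean value theorem, the left-hand side is `∫ f div φ` for the field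
`φ x = ψ (x - t • v) • v` at some `t ∈ (0, 1)`. -/
lemma ofReal_setIntegral_mul_sub_comp_sub_le (hf : IntegrableOn f W) (hψ : ContDiff ℝ 1 ψ)
    (hc : HasCompactSupport ψ) (hψ1 : ∀ x, ‖ψ x‖ ≤ 1) (hW : Convex ℝ W) (hψW : tsupport ψ ⊆ W)
    (hvW : ∀ x ∈ tsupport ψ, x + v ∈ W) :
    ENNReal.ofReal ((∫ x in W, f x * ψ x) - ∫ x in W, f x * ψ (x - v)) ≤
      ENNReal.ofReal ‖v‖ * var W f := by
  have hderiv := hasDerivAt_integral_mul_comp_sub_smul hf hψ hc v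
  obtain ⟨t, ht, hslope⟩ := exists_hasDerivAt_eq_slope _ _ zero_lt_one
    (fun t _ ↦ (hderiv t).continuousAt.continuousWithinAt) (fun t _ ↦ hderiv t)
  have hdiv (x) : divergence (fun x ↦ ψ (x - t • v) • v) x = fderiv ℝ ψ (x - t • v) v := by
    have hdiff := hψ.differentiable one_ne_zero
    rw [divergence_smul_const (by fun_prop), fderiv_comp_sub]
  have hdiff : (∫ x in W, f x * ψ x) - ∫ x in W, f x * ψ (x - v) =
      ∫ x in W, f x * divergence (fun x ↦ ψ (x - t • v) • v) x := by
    simp only [mul_neg, integral_neg, one_smul, zero_smul, sub_zero, div_one] at hslope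
    simp_rw [hdiv]
    linarith
  have hnorm (x) : ‖ψ (x - t • v) • v‖ ≤ ‖v‖ := by
    rw [norm_smul]
    exact mul_le_of_le_one_left (norm_nonneg v) (hψ1 _)
  rw [hdiff]
  exact (IsTestField.comp_sub_smul_const hψ hc hW hψW hvW
    (Ioo_subset_Icc_self ht)).ofReal_integral_le_mul_var hnorm

lemma ofReal_setIntegral_sub_setIntegral_vadd_le (hf : IntegrableOn f W) (hU : IsOpen U)
    (hW : Convex ℝ W) (hUW : U ⊆ W) (hvW : v +ᵥ U ⊆ W) :
    ENNReal.ofReal ((∫ x in U, f x) - ∫ x in v +ᵥ U, f x) ≤ ENNReal.ofReal ‖v‖ * var W f := by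
  obtain ⟨ψ, hψ, hlim⟩ := exists_seq_contDiff_tendsto_indicator (n := 1) hU
  choose hψd hc hψU h01 using hψ
  have hnorm (j x) : ‖ψ j x‖ ≤ 1 := by
    rw [Real.norm_of_nonneg (h01 j x).1]
    exact (h01 j x).2
  have hlimv (x) : Tendsto (fun j ↦ ψ j (x - v)) atTop (𝓝 ((v +ᵥ U).indicator 1 x)) := by
    have hind : (v +ᵥ U).indicator (1 : Ed d → ℝ) x = U.indicator 1 (x - v) := by
      classical
      simp only [indicator_apply, mem_vadd_set_iff_neg_vadd_mem, vadd_eq_add, neg_add_eq_sub,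
        Pi.one_apply]
    rw [hind]
    exact hlim (x - v)
  refine le_of_tendsto' (ENNReal.tendsto_ofReal (Tendsto.sub
    (tendsto_setIntegral_mul_of_tendsto_indicator hf hU.measurableSet hUW
      (fun j ↦ (hψd j).continuous.aestronglyMeasurable) hnorm hlim)
    (tendsto_setIntegral_mul_of_tendsto_indicator hf (hU.vadd v).measurableSet hvW
      (fun j ↦ ((hψd j).continuous.comp (continuous_sub_right v)).aestronglyMeasurable)
      (fun j x ↦ hnorm j (x - v)) hlimv))) fun j ↦ ?_
  refine ofReal_setIntegral_mul_sub_comp_sub_le hf (hψd j) (hc j) (hnorm j) hW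
    ((hψU j).trans hUW) fun x hx ↦ hvW ?_
  rw [add_comm]
  exact vadd_mem_vadd_set (hψU j hx)

end Translation

lemma ofReal_two_zpow (k : ℤ) : ENNReal.ofReal ((2 : ℝ) ^ k) = 2 ^ k := by
  rw [ENNReal.ofReal, Real.toNNReal_zpow zero_le_two, ENNReal.coe_zpow (by simp)]
  simp

lemma tsum_two_zpow_sub_add_one (n : ℤ) : ∑' i : ℕ, (2 : ℝ≥0∞) ^ (n - (i + 1)) = 2 ^ n := by
  have hterm (i : ℕ) : (2 : ℝ≥0∞) ^ (n - (i + 1)) = 2 ^ n * 2⁻¹ ^ (i + 1) := by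
    rw [ENNReal.zpow_sub two_ne_zero ENNReal.ofNat_ne_top, ← ENNReal.inv_pow]
    norm_cast
  simp_rw [hterm]
  rw [ENNReal.tsum_mul_left, ENNReal.tsum_geometric_add_one, ENNReal.one_sub_inv_two, inv_inv,
    ENNReal.inv_mul_cancel two_ne_zero ENNReal.ofNat_ne_top, mul_one]

lemma ofReal_sub_le_sum_ofReal_sub (u : ℕ → ℝ) (j : ℕ) :
    ENNReal.ofReal (u j - u 0) ≤ ∑ i ∈ Finset.range j, ENNReal.ofReal (u (i + 1) - u i) := by
  rw [← Finset.sum_range_sub]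
  exact Finset.le_sum_of_subadditive ENNReal.ofReal ENNReal.ofReal_zero.le
    (fun _ _ ↦ ENNReal.ofReal_add_le) _ _

lemma ofReal_csSup_sub_le {S : Set ℝ} (hS : S.Nonempty) {a : ℝ} {B : ℝ≥0∞}
    (h : ∀ y ∈ S, ENNReal.ofReal (y - a) ≤ B) : ENNReal.ofReal (sSup S - a) ≤ B := by
  rcases eq_or_ne B ∞ with rfl | hB
  · exact le_top
  refine ENNReal.ofReal_le_of_le_toReal (sub_le_iff_le_add.2 (csSup_le hS fun y hy ↦ ?_))
  exact sub_le_iff_le_add.1 ((ENNReal.ofReal_le_iff_le_toReal hB).1 (h y hy))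

section DyadicCube

open scoped Pointwise

variable {d : ℕ}

/-- The index of the dyadic cube of side length `2 ^ k` containing `x`. -/
def dyadicIndex (k : ℤ) (x : Ed d) : Fin d → ℤ := fun i ↦ ⌊x i / (2 : ℝ) ^ k⌋

/-- The dyadic cube of side length `2 ^ k` with index `m`, written as a level set of
`dyadicIndex k` so that cubes of equal size are visibly disjoint and cover the space. -/
def dyadicCube (k : ℤ) (m : Fin d → ℤ) : Set (Ed d) := {x | dyadicIndex k x = m}

lemma dyadicCube_eq (k : ℤ) (m : Fin d → ℤ) : dyadicCube k m =
    {x : Ed d | ∀ i, x i ∈ Ico ((2 : ℝ) ^ k * m i) ((2 : ℝ) ^ k * (m i + 1))} := by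
  have h2 : (0 : ℝ) < 2 ^ k := by positivity
  ext x
  simp only [dyadicCube, dyadicIndex, mem_ofPred_eq, funext_iff, Int.floor_eq_iff, mem_Ico,
    le_div_iff₀ h2, div_lt_iff₀ h2, mul_comm]

lemma isDyadicCube_iff {Q : Set (Ed d)} : IsDyadicCube Q ↔ ∃ k m, Q = dyadicCube k m := by
  simp only [IsDyadicCube, dyadicCube_eq]

lemma measurable_dyadicIndex (k : ℤ) : Measurable (dyadicIndex k : Ed d → Fin d → ℤ) :=
  measurable_pi_lambda _ fun i ↦ Int.measurable_floor.comp (by fun_prop)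

lemma measurableSet_dyadicCube (k : ℤ) (m : Fin d → ℤ) : MeasurableSet (dyadicCube k m) :=
  measurable_dyadicIndex k (measurableSet_singleton m)

lemma convex_dyadicCube (k : ℤ) (m : Fin d → ℤ) : Convex ℝ (dyadicCube k m) := by
  rw [dyadicCube_eq]
  intro x hx y hy a b ha hb hab i
  exact convex_Ico _ _ (hx i) (hy i) ha hb hab

lemma pairwise_disjoint_dyadicCube (k : ℤ) :
    Pairwise (Function.onFun Disjoint (dyadicCube k : (Fin d → ℤ) → Set (Ed d))) :=
  fun _ _ h ↦ Set.disjoint_left.2 fun _ hx hx' ↦ h (hx.symm.trans hx')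

lemma interior_dyadicCube_ae_eq (k : ℤ) (m : Fin d → ℤ) :
    interior (dyadicCube k m) =ᵐ[volume] dyadicCube k m :=
  interior_ae_eq_of_null_frontier ((convex_dyadicCube k m).addHaar_frontier volume)

lemma volume_dyadicCube (k : ℤ) (m : Fin d → ℤ) :
    volume (dyadicCube k m) = ((2 : ℝ≥0∞) ^ k) ^ d := by
  have hpre : dyadicCube k m = (WithLp.ofLp : Ed d → Fin d → ℝ) ⁻¹'
      (univ.pi fun i ↦ Ico ((2 : ℝ) ^ k * m i) ((2 : ℝ) ^ k * (m i + 1))) := by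
    rw [dyadicCube_eq]
    ext x
    simp
  rw [hpre, (PiLp.volume_preserving_ofLp (Fin d)).measure_preimage
    (MeasurableSet.univ_pi fun _ ↦ measurableSet_Ico).nullMeasurableSet, Real.volume_pi_Ico]
  simp [mul_add, ofReal_two_zpow]

lemma volume_dyadicCube_ne_zero (k : ℤ) (m : Fin d → ℤ) : volume (dyadicCube k m) ≠ 0 := by
  rw [volume_dyadicCube]
  exact pow_ne_zero _ (ENNReal.zpow_pos two_ne_zero ENNReal.ofNat_ne_top k).ne'

lemma volume_dyadicCube_ne_top (k : ℤ) (m : Fin d → ℤ) : volume (dyadicCube k m) ≠ ∞ := by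
  rw [volume_dyadicCube]
  exact ENNReal.pow_ne_top (ENNReal.zpow_lt_top two_ne_zero ENNReal.ofNat_ne_top k).ne

lemma volume_dyadicCube_rpow_one_div (hd : 1 ≤ d) (k : ℤ) (m : Fin d → ℤ) :
    volume (dyadicCube k m) ^ ((1 : ℝ) / d) = 2 ^ k := by
  have hd0 : (d : ℝ) ≠ 0 := by positivity
  rw [volume_dyadicCube, ← ENNReal.rpow_natCast, ← ENNReal.rpow_mul, mul_one_div_cancel hd0,
    ENNReal.rpow_one]

lemma volume_dyadicCube_add_one (k : ℤ) (m p : Fin d → ℤ) :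
    volume (dyadicCube (k + 1) m) = 2 ^ d * volume (dyadicCube k p) := by
  rw [volume_dyadicCube, volume_dyadicCube, ENNReal.zpow_add two_ne_zero ENNReal.ofNat_ne_top,
    zpow_one, mul_comm, mul_pow]

lemma dyadicIndex_add_one (k : ℤ) (x : Ed d) (i : Fin d) :
    dyadicIndex (k + 1) x i = dyadicIndex k x i / 2 := by
  simp only [dyadicIndex]
  rw [zpow_add_one₀ two_ne_zero, ← div_div]
  exact_mod_cast Int.floor_div_natCast (x i / (2 : ℝ) ^ k) 2

lemma dyadicCube_dyadicIndex_mono (x : Ed d) (n : ℤ) (j : ℕ) :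
    dyadicCube (n - j) (dyadicIndex (n - j) x) ⊆ dyadicCube n (dyadicIndex n x) := by
  induction j with
  | zero => simp
  | succ j ih =>
    refine Subset.trans (fun y hy ↦ ?_) ih
    have hscale : n - (j : ℤ) = (n - ((j + 1 : ℕ) : ℤ)) + 1 := by push_cast; ring
    funext i
    rw [hscale, dyadicIndex_add_one, dyadicIndex_add_one, show dyadicIndex _ y = _ from hy]

lemma scale_le_of_dyadicCube_subset (hd : 1 ≤ d) {k n : ℤ} {m p : Fin d → ℤ}
    (h : dyadicCube k m ⊆ dyadicCube n p) : k ≤ n := by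
  have hvol := measure_mono (μ := volume) h
  rw [volume_dyadicCube, volume_dyadicCube, ENNReal.pow_le_pow_left_iff (by omega),
    ← ofReal_two_zpow, ← ofReal_two_zpow, ENNReal.ofReal_le_ofReal_iff (by positivity)] at hvol
  exact (zpow_le_zpow_iff_right₀ one_lt_two).1 hvol

lemma norm_toLp_le_of_abs_le {x : Fin d → ℝ} {c : ℝ} (hx : ∀ i, |x i| ≤ c) :
    ‖(WithLp.toLp 2 x : Ed d)‖ ≤ d * c := by
  have hsum : (WithLp.toLp 2 x : Ed d) = ∑ i, EuclideanSpace.single i (x i) := by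
    ext j
    simp [Finset.sum_apply, Pi.single_apply]
  rw [hsum]
  refine (norm_sum_le _ _).trans
    ((Finset.sum_le_card_nsmul _ _ c fun i _ ↦ ?_).trans_eq (by simp))
  rw [PiLp.norm_single]
  exact hx i

lemma exists_vadd_dyadicCube_eq (k : ℤ) {p q : Fin d → ℤ} (hpq : ∀ i, |q i - p i| ≤ 1) :
    ∃ v : Ed d, ‖v‖ ≤ d * 2 ^ k ∧ v +ᵥ dyadicCube k p = dyadicCube k q := by
  have h2 : (0 : ℝ) < 2 ^ k := by positivity
  refine ⟨WithLp.toLp 2 fun i ↦ 2 ^ k * (q i - p i : ℤ), norm_toLp_le_of_abs_le fun i ↦ ?_, ?_⟩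
  · rw [abs_mul, abs_of_pos h2]
    exact mul_le_of_le_one_right h2.le (by exact_mod_cast hpq i)
  · ext x
    rw [mem_vadd_set_iff_neg_vadd_mem, vadd_eq_add, neg_add_eq_sub]
    have hindex : dyadicIndex k (x - WithLp.toLp 2 fun i ↦ (2 : ℝ) ^ k * (q i - p i : ℤ)) =
        dyadicIndex k x - (q - p) := by
      funext i
      simp only [dyadicIndex, PiLp.sub_apply, sub_div, mul_div_cancel_left₀ _ h2.ne',
        Int.floor_sub_intCast, Pi.sub_apply]
    rw [dyadicCube, dyadicCube, mem_ofPred_eq, mem_ofPred_eq, hindex, sub_eq_iff_eq_add,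
      add_sub_cancel]

/-- The indices of the `2 ^ d` dyadic cubes of side length `2 ^ k` that make up the dyadic cube
of side length `2 ^ (k + 1)` with index `m`. -/
def dyadicChildren (m : Fin d → ℤ) : Finset (Fin d → ℤ) :=
  Fintype.piFinset fun i ↦ {2 * m i, 2 * m i + 1}

lemma mem_dyadicChildren {m p : Fin d → ℤ} : p ∈ dyadicChildren m ↔ ∀ i, p i / 2 = m i := by
  simp only [dyadicChildren, Fintype.mem_piFinset, Finset.mem_insert, Finset.mem_singleton]
  exact forall_congr' fun i ↦ by omega

lemma card_dyadicChildren (m : Fin d → ℤ) : (dyadicChildren m).card = 2 ^ d := by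
  simp [dyadicChildren]

lemma abs_sub_le_one_of_mem_dyadicChildren {m p q : Fin d → ℤ} (hp : p ∈ dyadicChildren m)
    (hq : q ∈ dyadicChildren m) (i : Fin d) : |q i - p i| ≤ 1 := by
  have hpi := mem_dyadicChildren.1 hp i
  have hqi := mem_dyadicChildren.1 hq i
  rw [abs_le]
  omega

lemma dyadicCube_add_one_eq_biUnion (k : ℤ) (m : Fin d → ℤ) :
    dyadicCube (k + 1) m = ⋃ p ∈ dyadicChildren m, dyadicCube k p := by
  ext x
  have hindex : dyadicIndex (k + 1) x = m ↔ dyadicIndex k x ∈ dyadicChildren m := by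
    simp only [funext_iff, dyadicIndex_add_one, mem_dyadicChildren]
  simp [dyadicCube, hindex]

lemma dyadicCube_subset_of_mem_dyadicChildren (k : ℤ) {m p : Fin d → ℤ}
    (hp : p ∈ dyadicChildren m) : dyadicCube k p ⊆ dyadicCube (k + 1) m := by
  rw [dyadicCube_add_one_eq_biUnion]
  exact subset_biUnion_of_mem hp

end DyadicCube

section Oscillation

open scoped Pointwise

variable {d : ℕ} {f : Ed d → ℝ}

lemma exists_mem_dyadicChildren_setAverage_le {k : ℤ} {m : Fin d → ℤ}
    (hf : IntegrableOn f (dyadicCube (k + 1) m)) : ∃ q ∈ dyadicChildren m,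
      ⨍ x in dyadicCube k q, f x ≤ ⨍ x in dyadicCube (k + 1) m, f x := by
  have hne : (dyadicChildren m).Nonempty := Finset.card_pos.1 (by simp [card_dyadicChildren])
  refine Finset.exists_le_of_sum_le hne (le_of_eq ?_)
  have hvol (q : Fin d → ℤ) : (volume.real (dyadicCube k q))⁻¹ =
      2 ^ d * (volume.real (dyadicCube (k + 1) m))⁻¹ := by
    simp only [Measure.real, volume_dyadicCube_add_one k m q, ENNReal.toReal_mul,
      ENNReal.toReal_pow, ENNReal.toReal_ofNat]
    field_simp
  simp_rw [setAverage_eq, hvol]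
  rw [← Finset.smul_sum, ← integral_biUnion_finset _ (fun q _ ↦ measurableSet_dyadicCube k q)
    ((pairwise_disjoint_dyadicCube k).set_pairwise _)
    fun q hq ↦ hf.mono_set (dyadicCube_subset_of_mem_dyadicChildren k hq),
    ← dyadicCube_add_one_eq_biUnion, Finset.sum_const, card_dyadicChildren, nsmul_eq_mul]
  simp [mul_assoc]

lemma ofReal_setIntegral_dyadicCube_sub_le {k : ℤ} {p q : Fin d → ℤ} {W : Set (Ed d)}
    (hpq : ∀ i, |q i - p i| ≤ 1) (hW : Convex ℝ W) (hpW : dyadicCube k p ⊆ W)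
    (hqW : dyadicCube k q ⊆ W) (hf : IntegrableOn f W) :
    ENNReal.ofReal ((∫ x in dyadicCube k p, f x) - ∫ x in dyadicCube k q, f x) ≤
      d * 2 ^ k * var (interior W) f := by
  obtain ⟨v, hv, hvpq⟩ := exists_vadd_dyadicCube_eq k hpq
  have hvint : v +ᵥ interior (dyadicCube k p) = interior (dyadicCube k q) := by
    rw [← interior_vadd, hvpq]
  rw [← setIntegral_congr_set (interior_dyadicCube_ae_eq k p),
    ← setIntegral_congr_set (interior_dyadicCube_ae_eq k q), ← hvint]
  refine (ofReal_setIntegral_sub_setIntegral_vadd_le (hf.mono_set interior_subset) isOpen_interior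
    hW.interior (interior_mono hpW) (hvint ▸ interior_mono hqW)).trans ?_
  gcongr
  exact (ENNReal.ofReal_le_ofReal hv).trans_eq
    (by rw [ENNReal.ofReal_mul d.cast_nonneg, ENNReal.ofReal_natCast, ofReal_two_zpow])

/- Some sibling `q` of `p` has at most the average of the parent, and `p` is a translate of `q`. -/
lemma ofReal_setAverage_sub_setAverage_parent_le {k : ℤ} {m p : Fin d → ℤ}
    (hp : p ∈ dyadicChildren m) (hf : IntegrableOn f (dyadicCube (k + 1) m)) :
    ENNReal.ofReal ((⨍ x in dyadicCube k p, f x) - ⨍ x in dyadicCube (k + 1) m, f x) ≤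
      2 ^ d * d * 2 ^ k *
        (var (interior (dyadicCube (k + 1) m)) f / volume (dyadicCube (k + 1) m)) := by
  obtain ⟨q, hq, hqm⟩ := exists_mem_dyadicChildren_setAverage_le hf
  have hvol : volume.real (dyadicCube k q) = volume.real (dyadicCube k p) := by
    simp [Measure.real, volume_dyadicCube]
  have hinv : (volume (dyadicCube k p))⁻¹ = 2 ^ d * (volume (dyadicCube (k + 1) m))⁻¹ := by
    rw [volume_dyadicCube_add_one k m p, ENNReal.mul_inv (by simp) (by simp), ← mul_assoc,
      ENNReal.mul_inv_cancel (by simp) (by simp), one_mul]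
  have hvolpos : 0 < volume.real (dyadicCube k p) :=
    ENNReal.toReal_pos (volume_dyadicCube_ne_zero k p) (volume_dyadicCube_ne_top k p)
  calc ENNReal.ofReal ((⨍ x in dyadicCube k p, f x) - ⨍ x in dyadicCube (k + 1) m, f x)
      ≤ ENNReal.ofReal ((⨍ x in dyadicCube k p, f x) - ⨍ x in dyadicCube k q, f x) := by gcongr
    _ = (volume (dyadicCube k p))⁻¹ *
          ENNReal.ofReal ((∫ x in dyadicCube k p, f x) - ∫ x in dyadicCube k q, f x) := by
        rw [setAverage_eq, setAverage_eq, hvol, ← smul_sub, smul_eq_mul,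
          ENNReal.ofReal_mul (by positivity), ENNReal.ofReal_inv_of_pos hvolpos,
          ofReal_measureReal (volume_dyadicCube_ne_top k p)]
    _ ≤ (volume (dyadicCube k p))⁻¹ *
          (d * 2 ^ k * var (interior (dyadicCube (k + 1) m)) f) := by
        gcongr
        exact ofReal_setIntegral_dyadicCube_sub_le (abs_sub_le_one_of_mem_dyadicChildren hp hq)
          (convex_dyadicCube _ _) (dyadicCube_subset_of_mem_dyadicChildren k hp)
          (dyadicCube_subset_of_mem_dyadicChildren k hq) hf
    _ = _ := by
        rw [hinv, div_eq_mul_inv]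
        ring

/-- The variation of `f` on the (interior of the) dyadic cube of side length `2 ^ k` containing
`x`, divided by the volume of that cube: the density of the variation at scale `2 ^ k`. -/
def dyadicVarDensity (f : Ed d → ℝ) (k : ℤ) (x : Ed d) : ℝ≥0∞ :=
  var (interior (dyadicCube k (dyadicIndex k x))) f / volume (dyadicCube k (dyadicIndex k x))

lemma measurable_dyadicVarDensity (f : Ed d → ℝ) (k : ℤ) : Measurable (dyadicVarDensity f k) :=
  (measurable_of_countable fun m : Fin d → ℤ ↦
    var (interior (dyadicCube k m)) f / volume (dyadicCube k m)).comp (measurable_dyadicIndex k)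

lemma setLIntegral_dyadicVarDensity_self (f : Ed d → ℝ) (k : ℤ) (m : Fin d → ℤ) :
    ∫⁻ x in dyadicCube k m, dyadicVarDensity f k x = var (interior (dyadicCube k m)) f := by
  rw [setLIntegral_congr_fun (measurableSet_dyadicCube k m)
    (fun x hx ↦ by rw [dyadicVarDensity, show dyadicIndex k x = m from hx]), setLIntegral_const,
    ENNReal.div_mul_cancel (volume_dyadicCube_ne_zero k m) (volume_dyadicCube_ne_top k m)]

lemma setLIntegral_dyadicVarDensity_le {n : ℤ} {p : Fin d → ℤ}
    (hf : IntegrableOn f (dyadicCube n p)) (i : ℕ) :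
    ∫⁻ x in dyadicCube n p, dyadicVarDensity f (n - i) x ≤ var (interior (dyadicCube n p)) f := by
  let I := {m : Fin d → ℤ // dyadicCube (n - i) m ⊆ dyadicCube n p}
  have hcover : dyadicCube n p ⊆ ⋃ m : I, dyadicCube (n - i) m.1 := by
    rintro x rfl
    exact mem_iUnion.2 ⟨⟨dyadicIndex (n - i) x, dyadicCube_dyadicIndex_mono x n i⟩, rfl⟩
  calc ∫⁻ x in dyadicCube n p, dyadicVarDensity f (n - i) x
      ≤ ∑' m : I, ∫⁻ x in dyadicCube (n - i) m.1, dyadicVarDensity f (n - i) x :=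
        (lintegral_mono_set hcover).trans (lintegral_iUnion_le _ _)
    _ = ∑' m : I, var (interior (dyadicCube (n - i) m.1)) f := by
        simp_rw [setLIntegral_dyadicVarDensity_self]
    _ ≤ var (interior (dyadicCube n p)) f :=
        tsum_var_le (fun _ ↦ isOpen_interior.measurableSet)
          (fun m m' h ↦ (pairwise_disjoint_dyadicCube _ (Subtype.coe_ne_coe.2 h)).mono
            interior_subset interior_subset)
          isOpen_interior.measurableSet (fun m ↦ interior_mono m.2) (hf.mono_set interior_subset)

lemma ofReal_setAverage_dyadicCube_sub_le {n : ℤ} {x : Ed d}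
    (hf : IntegrableOn f (dyadicCube n (dyadicIndex n x))) (j : ℕ) :
    ENNReal.ofReal ((⨍ z in dyadicCube (n - j) (dyadicIndex (n - j) x), f z) -
        ⨍ z in dyadicCube n (dyadicIndex n x), f z) ≤
      ∑ i ∈ Finset.range j, 2 ^ d * d * 2 ^ (n - (i + 1)) * dyadicVarDensity f (n - i) x := by
  have htelescope := ofReal_sub_le_sum_ofReal_sub
    (fun i : ℕ ↦ ⨍ z in dyadicCube (n - i) (dyadicIndex (n - i) x), f z) j
  simp only [Nat.cast_zero, sub_zero] at htelescope
  refine htelescope.trans (Finset.sum_le_sum fun i _ ↦ ?_)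
  have hscale : n - (i + 1) + 1 = n - i := by ring
  have hchild : dyadicIndex (n - (i + 1)) x ∈ dyadicChildren (dyadicIndex (n - i) x) :=
    mem_dyadicChildren.2 fun l ↦ by rw [← hscale, dyadicIndex_add_one]
  have hjump := ofReal_setAverage_sub_setAverage_parent_le (k := n - (i + 1)) (f := f) hchild
  rw [hscale] at hjump
  exact_mod_cast hjump (hf.mono_set (dyadicCube_dyadicIndex_mono x n i))

lemma ofReal_dyadicMaxFunIn_sub_setAverage_le (hd : 1 ≤ d) {n : ℤ} {p : Fin d → ℤ}
    (hf : IntegrableOn f (dyadicCube n p)) {x : Ed d} (hx : x ∈ dyadicCube n p) :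
    ENNReal.ofReal (dyadicMaxFunIn (dyadicCube n p) f x - ⨍ z in dyadicCube n p, f z) ≤
      ∑' i : ℕ, 2 ^ d * d * 2 ^ (n - (i + 1)) * dyadicVarDensity f (n - i) x := by
  have hQ : IsDyadicCube (dyadicCube n p) := isDyadicCube_iff.2 ⟨n, p, rfl⟩
  refine ofReal_csSup_sub_le ?_ ?_
  · exact ⟨_, dyadicCube n p, hQ, hx, Subset.rfl, rfl⟩
  rintro y ⟨P, hP, hxP, hPQ, rfl⟩
  obtain ⟨k, m, rfl⟩ := isDyadicCube_iff.1 hP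
  obtain ⟨j, hj⟩ := Int.le.dest (scale_le_of_dyadicCube_subset hd hPQ)
  obtain rfl : k = n - j := by omega
  obtain rfl : dyadicIndex (n - j) x = m := hxP
  obtain rfl : dyadicIndex n x = p := hx
  exact (ofReal_setAverage_dyadicCube_sub_le hf j).trans (ENNReal.sum_le_tsum _)

lemma setLIntegral_ofReal_dyadicMaxFunIn_sub_setAverage_le (hd : 1 ≤ d) {n : ℤ} {p : Fin d → ℤ}
    (hf : IntegrableOn f (dyadicCube n p)) :
    ∫⁻ x in dyadicCube n p,
        ENNReal.ofReal (dyadicMaxFunIn (dyadicCube n p) f x - ⨍ z in dyadicCube n p, f z) ≤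
      2 ^ d * d * (2 ^ n * var (interior (dyadicCube n p)) f) := by
  calc ∫⁻ x in dyadicCube n p,
        ENNReal.ofReal (dyadicMaxFunIn (dyadicCube n p) f x - ⨍ z in dyadicCube n p, f z)
      ≤ ∫⁻ x in dyadicCube n p,
          ∑' i : ℕ, 2 ^ d * d * 2 ^ (n - (i + 1)) * dyadicVarDensity f (n - i) x :=
        setLIntegral_mono' (measurableSet_dyadicCube n p) fun x hx ↦
          ofReal_dyadicMaxFunIn_sub_setAverage_le hd hf hx
    _ = ∑' i : ℕ, 2 ^ d * d * 2 ^ (n - (i + 1)) *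
          ∫⁻ x in dyadicCube n p, dyadicVarDensity f (n - i) x := by
        rw [lintegral_tsum fun i ↦
          ((measurable_dyadicVarDensity f _).const_mul _).aemeasurable]
        simp_rw [lintegral_const_mul _ (measurable_dyadicVarDensity f _)]
    _ ≤ ∑' i : ℕ, 2 ^ d * d * 2 ^ (n - (i + 1)) * var (interior (dyadicCube n p)) f := by
        gcongr with i
        exact setLIntegral_dyadicVarDensity_le hf i
    _ = 2 ^ d * d * (2 ^ n * var (interior (dyadicCube n p)) f) := by
        rw [ENNReal.tsum_mul_right, ENNReal.tsum_mul_left, tsum_two_zpow_sub_add_one, mul_assoc]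

end Oscillation

theorem integral_maxfun_on_cube_bound_general {d : ℕ} (hd : 1 ≤ d) {Q : Set (Ed d)}
    (hQ : IsDyadicCube Q) {f : Ed d → ℝ} (hf : IntegrableOn f Q) :
    ∫⁻ x in Q, ENNReal.ofReal (dyadicMaxFunIn Q f x) ≤
      2 ^ d * d * ((∫⁻ x in Q, ENNReal.ofReal (f x)) +
        volume Q ^ ((1 : ℝ) / d) * var (interior Q) f) := by
  obtain ⟨n, p, rfl⟩ := isDyadicCube_iff.1 hQ
  rw [volume_dyadicCube_rpow_one_div hd, mul_add]
  have hC : (1 : ℝ≥0∞) ≤ 2 ^ d * d :=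
    one_le_mul (one_le_pow₀ one_le_two) (by exact_mod_cast hd)
  calc ∫⁻ x in dyadicCube n p, ENNReal.ofReal (dyadicMaxFunIn (dyadicCube n p) f x)
      ≤ ∫⁻ x in dyadicCube n p, (ENNReal.ofReal (⨍ z in dyadicCube n p, f z) +
          ENNReal.ofReal (dyadicMaxFunIn (dyadicCube n p) f x - ⨍ z in dyadicCube n p, f z)) := by
        gcongr with x
        exact (congrArg _ (add_sub_cancel _ _).symm).trans_le ENNReal.ofReal_add_le
    _ = ENNReal.ofReal (⨍ z in dyadicCube n p, f z) * volume (dyadicCube n p) +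
          ∫⁻ x in dyadicCube n p, ENNReal.ofReal
            (dyadicMaxFunIn (dyadicCube n p) f x - ⨍ z in dyadicCube n p, f z) := by
        rw [lintegral_add_left measurable_const, setLIntegral_const]
    _ ≤ 2 ^ d * d * (∫⁻ x in dyadicCube n p, ENNReal.ofReal (f x)) +
          2 ^ d * d * (2 ^ n * var (interior (dyadicCube n p)) f) := by
        refine add_le_add ?_ (setLIntegral_ofReal_dyadicMaxFunIn_sub_setAverage_le hd hf)
        exact (ofReal_setAverage_mul_measure_le (volume_dyadicCube_ne_top n p) hf).trans
          (le_mul_of_one_le_left' hC)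

/-- `∫_Q M_Q f ≤ C_d (∫_Q f + |Q|^{1/d} var_{interior Q} f)` for nonnegative `f ∈ L¹(Q)`
with bounded variation on the interior of the dyadic cube `Q`. -/
theorem integral_maxfun_on_cube_bound (d : ℕ) (hd : 1 ≤ d) :
    ∃ C : ℝ≥0∞, C ≠ ∞ ∧
      ∀ (Q : Set (Ed d)), IsDyadicCube Q →
        ∀ f : Ed d → ℝ, IntegrableOn f Q volume → (∀ x, 0 ≤ f x) →
          var (interior Q) f < ∞ →
          ∫⁻ x in Q, ENNReal.ofReal (dyadicMaxFunIn Q f x) ≤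
            C * ((∫⁻ x in Q, ENNReal.ofReal (f x)) +
              volume Q ^ ((1:ℝ) / d) * var (interior Q) f) := by
  exact ⟨2 ^ d * d, by finiteness,
    fun _ hQ _ hf _ _ ↦ integral_maxfun_on_cube_bound_general hd hQ hf⟩

end
end
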